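/- Assume condition (D1) (A is increasing on [0,1]) and let F₀ and G₀ be cumulative distribution functions of probability measures on ℝ with finite first moments. Let F and G be the unique weak solutions in 𝓕 of the Cauchy problem with respective initial conditions F₀ and G₀. Let p ≥ 1. If W_p(F₀,G₀) < +∞, then the map t ↦ W_p(F_t,G_t) is nonincreasing on [0,∞). -/

import Mathlib

open MeasureTheory Set Filter Topology Function
open scoped ENNReal

noncomputable section

/-- `primitive f u = ∫₀^u f(v) dv`. -/
def primitive (f : ℝ → ℝ) : ℝ → ℝ := fun u => ∫ v in (0:ℝ)..u, f v

/-- The cumulative distribution function `H * μ` of a measure `μ` on `ℝ`. -/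
def cdfOf (μ : MeasureTheory.Measure ℝ) : ℝ → ℝ := fun x => (μ (Set.Iic x)).toReal

/-- Pseudo-inverse of a cdf: `F⁻¹(u) = inf {x | F x > u}`. -/
def pinv (F : ℝ → ℝ) (u : ℝ) : ℝ := sInf {x : ℝ | u < F x}

/-- Wasserstein distance of order `p` between two cdfs, as an element of `[0,∞]`:
`W_p(F,G) = (∫₀¹ |F⁻¹(u) - G⁻¹(u)|^p du)^(1/p)`. -/
def Wdist (p : ℝ) (F G : ℝ → ℝ) : ℝ≥0∞ :=
  (∫⁻ u in Set.Ioo (0:ℝ) 1, ENNReal.ofReal (|pinv F u - pinv G u| ^ p)) ^ (1/p)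

/-- `F` is a weak solution of `∂ₜ F = (1/2) ∂ₓₓ (A (F)) - ∂ₓ (B (F))` with
initial condition `F₀`. -/
def IsWeakSolution (A B : ℝ → ℝ) (F₀ : ℝ → ℝ) (F : ℝ → ℝ → ℝ) : Prop :=
  ∀ g : ℝ → ℝ → ℝ, ContDiff ℝ (⊤ : ℕ∞) (Function.uncurry g) →
    HasCompactSupport (Function.uncurry g) →
    ∀ t : ℝ, 0 ≤ t →
      ((∫ x : ℝ, g t x * F t x) - ∫ x : ℝ, g 0 x * F₀ x) =
        ∫ x : ℝ, ∫ s in (0:ℝ)..t,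
          ((1/2) * A (F s x) * deriv (deriv (fun y => g s y)) x
            + B (F s x) * deriv (fun y => g s y) x
            + F s x * deriv (fun r => g r x) s)

/-- Membership in the class `𝓕`. -/
def MemF (F : ℝ → ℝ → ℝ) : Prop :=
  ∃ P : ℝ → ProbabilityMeasure ℝ,
    ContinuousOn P (Set.Ici 0) ∧
    (∀ t : ℝ, 0 ≤ t → Integrable (fun x => |x|) (P t : Measure ℝ)) ∧
    (∀ T : ℝ, 0 < T → IntegrableOn (fun t => ∫ x, |x| ∂(P t : Measure ℝ)) (Set.Icc 0 T)) ∧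
    (∀ t : ℝ, 0 ≤ t → ∀ x : ℝ, F t x = ((P t : Measure ℝ) (Set.Iic x)).toReal)

namespace WF

/-- mollification -/
def mol (κ h : ℝ → ℝ) (x : ℝ) : ℝ := ∫ y, κ y * h (x - y)

structure Moll (η : ℝ → ℝ) (δ : ℝ) : Prop where
  pos : 0 < δ
  smooth : ContDiff ℝ (⊤ : ℕ∞) η
  nonneg : ∀ y, 0 ≤ η y
  supp : ∀ y, δ < |y| → η y = 0
  int : ∫ y, η y = 1

theorem exists_moll (δ : ℝ) (hδ : 0 < δ) : ∃ η, Moll η δ := by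
  let f : ContDiffBump (0:ℝ) := ⟨δ/2, δ, by positivity, by linarith⟩
  refine ⟨f.normed volume, hδ, f.contDiff_normed, fun y => f.nonneg_normed y, ?_, f.integral_normed⟩
  intro y hy
  have := f.support_normed_eq (μ := volume)
  by_contra h
  have h2 : y ∈ Function.support (f.normed volume) := h
  rw [this, Metric.mem_ball, dist_zero_right, Real.norm_eq_abs] at h2
  exact absurd h2 (not_lt.2 hy.le)

theorem Moll.cs {η : ℝ → ℝ} {δ : ℝ} (h : Moll η δ) : HasCompactSupport η := by
  apply HasCompactSupport.intro (isCompact_Icc (a := -δ) (b := δ))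
  intro x hx
  apply h.supp
  by_contra hc
  exact hx (abs_le.1 (not_lt.1 hc))

theorem Moll.supp_deriv {η : ℝ → ℝ} {δ : ℝ} (h : Moll η δ) (y : ℝ) (hy : δ < |y|) :
    deriv η y = 0 := by
  have : η =ᶠ[𝓝 y] fun _ => 0 := by
    have : IsOpen {z : ℝ | δ < |z|} := isOpen_lt continuous_const continuous_abs
    filter_upwards [this.mem_nhds hy] with z hz using h.supp z hz
  rw [this.deriv_eq]; simp

theorem Moll.smooth' {η : ℝ → ℝ} {δ : ℝ} (h : Moll η δ) : ContDiff ℝ (⊤ : ℕ∞) (deriv η) := by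
  have := h.smooth
  rw [show ((⊤ : ℕ∞) : WithTop ℕ∞) = ((⊤ : ℕ∞) : WithTop ℕ∞) + 1 from rfl] at this
  exact (contDiff_succ_iff_deriv.1 this).2.2

theorem Moll.smooth'' {η : ℝ → ℝ} {δ : ℝ} (h : Moll η δ) :
    ContDiff ℝ (⊤ : ℕ∞) (deriv (deriv η)) := by
  have := h.smooth'
  rw [show ((⊤ : ℕ∞) : WithTop ℕ∞) = ((⊤ : ℕ∞) : WithTop ℕ∞) + 1 from rfl] at this
  exact (contDiff_succ_iff_deriv.1 this).2.2

theorem Moll.cs' {η : ℝ → ℝ} {δ : ℝ} (h : Moll η δ) : HasCompactSupport (deriv η) := h.cs.deriv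
theorem Moll.cs'' {η : ℝ → ℝ} {δ : ℝ} (h : Moll η δ) : HasCompactSupport (deriv (deriv η)) :=
  h.cs.deriv.deriv

theorem mol_integrable {κ h : ℝ → ℝ} (hκ : Continuous κ) (hc : HasCompactSupport κ)
    (hm : Measurable h) {C : ℝ} (hC : ∀ x, |h x| ≤ C) (x : ℝ) :
    Integrable (fun y => κ y * h (x - y)) := by
  refine (hκ.integrable_of_hasCompactSupport hc).mul_bdd (c := C) ?_ ?_
  · exact (hm.comp (measurable_const.sub measurable_id)).aestronglyMeasurable
  · exact Eventually.of_forall fun y => hC _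

theorem bdd_locInt {h : ℝ → ℝ} (hm : Measurable h) {C : ℝ} (hC : ∀ x, |h x| ≤ C) :
    LocallyIntegrable h := by
  have : LocallyIntegrable (fun _ : ℝ => C) := locallyIntegrable_const C
  exact this.mono hm.aestronglyMeasurable (Eventually.of_forall fun x => by
    simpa using (hC x).trans (le_abs_self C))

theorem mol_hasDerivAt {κ h : ℝ → ℝ} (hκ : ContDiff ℝ (⊤ : ℕ∞) κ) (hc : HasCompactSupport κ)
    (hm : Measurable h) {C : ℝ} (hC : ∀ x, |h x| ≤ C) (x : ℝ) :
    HasDerivAt (mol κ h) (mol (deriv κ) h x) x :=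
  hc.hasDerivAt_convolution_left (ContinuousLinearMap.mul ℝ ℝ)
    (hκ.of_le (by exact_mod_cast le_top)) (bdd_locInt hm hC) x

theorem mol_abs_le {κ h : ℝ → ℝ} (hκ : Continuous κ) (hc : HasCompactSupport κ)
    {C : ℝ} (hC : ∀ x, |h x| ≤ C) (x : ℝ) :
    |mol κ h x| ≤ C * ∫ y, |κ y| := by
  unfold mol
  rw [← Real.norm_eq_abs, ← integral_const_mul]
  apply norm_integral_le_of_norm_le
  · exact ((hκ.integrable_of_hasCompactSupport hc).abs).const_mul C
  · refine Eventually.of_forall fun y => ?_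
    rw [norm_mul, Real.norm_eq_abs, Real.norm_eq_abs, mul_comm]
    exact mul_le_mul_of_nonneg_right (hC _) (abs_nonneg _)

theorem mol_sub {κ h g : ℝ → ℝ} (hκ : Continuous κ) (hc : HasCompactSupport κ)
    (hm : Measurable h) {C : ℝ} (hC : ∀ x, |h x| ≤ C)
    (gm : Measurable g) {C' : ℝ} (gC : ∀ x, |g x| ≤ C') (x : ℝ) :
    mol κ (fun z => h z - g z) x = mol κ h x - mol κ g x := by
  unfold mol
  rw [← integral_sub (mol_integrable hκ hc hm hC x) (mol_integrable hκ hc gm gC x)]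
  congr 1; ext y; ring

theorem mol_smul {κ h : ℝ → ℝ} (c : ℝ) (x : ℝ) :
    mol κ (fun z => c * h z) x = c * mol κ h x := by
  unfold mol
  rw [← integral_const_mul]
  congr 1; ext y; ring

theorem mol_comp_add {κ h : ℝ → ℝ} (r x : ℝ) :
    mol κ (fun z => h (z + r)) x = mol κ h (x + r) := by
  unfold mol
  congr 1; ext y; ring_nf

section bounds
variable {η : ℝ → ℝ} {δ : ℝ}

theorem Moll.integrable (h : Moll η δ) : Integrable η :=
  h.smooth.continuous.integrable_of_hasCompactSupport h.cs

theorem Moll.mol_le (hη : Moll η δ) {h : ℝ → ℝ} (hm : Measurable h) {C : ℝ} (hC : ∀ x, |h x| ≤ C)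
    (x c : ℝ) (hle : ∀ z ∈ Icc (x - δ) (x + δ), h z ≤ c) : mol η h x ≤ c := by
  have h1 : c = ∫ y, η y * c := by rw [integral_mul_const, hη.int, one_mul]
  rw [h1]
  apply integral_mono (mol_integrable hη.smooth.continuous hη.cs hm hC x)
    (hη.integrable.mul_const c)
  intro y
  by_cases hy : δ < |y|
  · simp [hη.supp y hy]
  · have := abs_le.1 (not_lt.1 hy)
    exact mul_le_mul_of_nonneg_left (hle _ ⟨by linarith, by linarith⟩) (hη.nonneg y)

theorem Moll.le_mol (hη : Moll η δ) {h : ℝ → ℝ} (hm : Measurable h) {C : ℝ} (hC : ∀ x, |h x| ≤ C)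
    (x c : ℝ) (hle : ∀ z ∈ Icc (x - δ) (x + δ), c ≤ h z) : c ≤ mol η h x := by
  have h1 : c = ∫ y, η y * c := by rw [integral_mul_const, hη.int, one_mul]
  rw [h1]
  apply integral_mono (hη.integrable.mul_const c)
    (mol_integrable hη.smooth.continuous hη.cs hm hC x)
  intro y
  by_cases hy : δ < |y|
  · simp [hη.supp y hy]
  · have := abs_le.1 (not_lt.1 hy)
    exact mul_le_mul_of_nonneg_left (hle _ ⟨by linarith, by linarith⟩) (hη.nonneg y)

theorem Moll.mol_mono (hη : Moll η δ) {h : ℝ → ℝ} (hm : Monotone h) {C : ℝ}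
    (hC : ∀ x, |h x| ≤ C) : Monotone (mol η h) := by
  intro x x' hx
  apply integral_mono (mol_integrable hη.smooth.continuous hη.cs hm.measurable hC x)
    (mol_integrable hη.smooth.continuous hη.cs hm.measurable hC x')
  intro y
  exact mul_le_mul_of_nonneg_left (hm (by linarith)) (hη.nonneg y)

/-- monotone near `x` implies nonnegative derivative of mollification -/
theorem Moll.deriv_nonneg (hη : Moll η δ) {h : ℝ → ℝ} (x : ℝ)
    (hm : MonotoneOn h (Icc (x - δ) (x + δ))) : 0 ≤ mol (deriv η) h x := by
  have hδ := hη.pos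
  let g : ℝ → ℝ := fun z => h (projIcc (x - δ) (x + δ) (by linarith) z)
  have hg : Monotone g := by
    intro z z' hz
    exact hm (projIcc _ _ _ z).2 (projIcc _ _ _ z').2 (monotone_projIcc _ hz)
  have hgC : ∀ z, |g z| ≤ |h (x - δ)| + |h (x + δ)| := by
    intro z
    have hp := (projIcc (x - δ) (x + δ) (by linarith) z).2
    have h1 : h (x - δ) ≤ g z := hm ⟨le_rfl, by linarith⟩ hp hp.1
    have h2 : g z ≤ h (x + δ) := hm hp ⟨by linarith, le_rfl⟩ hp.2
    rw [abs_le]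
    constructor
    · linarith [neg_abs_le (h (x - δ)), abs_nonneg (h (x + δ))]
    · linarith [le_abs_self (h (x + δ)), abs_nonneg (h (x - δ))]
  have h1 : mol (deriv η) h x = mol (deriv η) g x := by
    unfold mol
    congr 1; ext y
    by_cases hy : δ < |y|
    · simp [hη.supp_deriv y hy]
    · have := abs_le.1 (not_lt.1 hy)
      have h3 : projIcc (x - δ) (x + δ) (by linarith) (x - y) = ⟨x - y, by linarith, by linarith⟩ :=
        projIcc_of_mem _ _
      simp [g, h3]
  rw [h1]
  have hd := mol_hasDerivAt hη.smooth hη.cs hg.measurable hgC x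
  rw [← hd.deriv]
  exact (hη.mol_mono hg hgC).deriv_nonneg

/-- lower bound from a jump -/
theorem Moll.jump (hη : Moll η δ) {h : ℝ → ℝ} (hm : Monotone h) {C : ℝ}
    (hC : ∀ x, |h x| ≤ C) (x₀ j l : ℝ) (hl : ∀ z < x₀, h z ≤ l) (hr : ∀ z > x₀, l + j ≤ h z)
    (hj : 0 ≤ j) (x : ℝ) : j * η (x - x₀) ≤ mol (deriv η) h x := by
  let g : ℝ → ℝ := fun z => h z - j * (Ioi x₀).indicator (fun _ => (1:ℝ)) z
  have hH : Monotone (fun z => (Ioi x₀).indicator (fun _ => (1:ℝ)) z) := by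
    intro z z' hz
    by_cases h1 : x₀ < z
    · have h2 : x₀ < z' := h1.trans_le hz
      simp [h1, h2]
    · simp only [Set.indicator, mem_Ioi, h1, if_false]; split_ifs <;> norm_num
  have hHC : ∀ z, |(Ioi x₀).indicator (fun _ => (1:ℝ)) z| ≤ 1 := by
    intro z; simp only [Set.indicator]; split_ifs <;> norm_num
  have hgm : MonotoneOn g {x₀}ᶜ := by
    intro z hz z' hz' hzz
    rcases lt_or_gt_of_ne (show z ≠ x₀ from hz) with h1 | h1 <;>
    rcases lt_or_gt_of_ne (show z' ≠ x₀ from hz') with h2 | h2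
    · simp [g, h1.le, h2.le]; exact hm hzz
    · simp [g, h1.le, h2]; linarith [hl z h1, hr z' h2]
    · linarith
    · simp [g, h1, h2]; exact hm hzz
  -- modify at x₀
  let g' : ℝ → ℝ := fun z => if z = x₀ then l else g z
  have hg' : Monotone g' := by
    intro z z' hz
    by_cases h1 : z = x₀ <;> by_cases h2 : z' = x₀
    · simp [g', h1, h2]
    · have : x₀ < z' := lt_of_le_of_ne (h1 ▸ hz) (Ne.symm h2)
      simp only [g', h1, h2, if_true, if_false]; simp [g, this]; linarith [hr z' this]
    · have : z < x₀ := lt_of_le_of_ne (h2 ▸ hz) h1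
      simp only [g', h1, h2, if_true, if_false]; simp [g, this.le]; exact hl z this
    · simp only [g', h1, h2, if_false]; exact hgm h1 h2 hz
  have h1 : 0 ≤ mol (deriv η) g' x := hη.deriv_nonneg x (hg'.monotoneOn _)
  have h2 : mol (deriv η) g' x = mol (deriv η) g x := by
    unfold mol
    apply integral_congr_ae
    have : ∀ᵐ y : ℝ, y ≠ x - x₀ := by simp [ae_iff]
    filter_upwards [this] with y hy
    have : x - y ≠ x₀ := fun hh => hy (by linarith)
    simp [g', this]
  have h3 : mol (deriv η) g x = mol (deriv η) h x -
      j * mol (deriv η) ((Ioi x₀).indicator (fun _ => (1:ℝ))) x := by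
    rw [← mol_smul, ← mol_sub hη.smooth'.continuous hη.cs' hm.measurable hC
      (hH.measurable.const_mul j) (C' := j * 1)]
    intro z; rw [abs_mul, abs_of_nonneg hj]; exact mul_le_mul_of_nonneg_left (hHC z) hj
  have h4 : mol (deriv η) ((Ioi x₀).indicator (fun _ => (1:ℝ))) x = η (x - x₀) := by
    have : ∀ y, deriv η y * (Ioi x₀).indicator (fun _ => (1:ℝ)) (x - y)
        = (Iio (x - x₀)).indicator (deriv η) y := by
      intro y
      simp only [Set.indicator, mem_Ioi, mem_Iio]
      by_cases h : x₀ < x - y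
      · have : y < x - x₀ := by linarith
        simp [h, this]
      · have : ¬ y < x - x₀ := by intro h'; apply h; linarith
        simp [h, this]
    unfold mol
    simp_rw [this]
    rw [integral_indicator measurableSet_Iio, ← integral_Iic_eq_integral_Iio]
    rw [integral_Iic_of_hasDerivAt_of_tendsto' (f := η) (m := 0)]
    · simp
    · intro y _; exact (hη.smooth.differentiable (by simp) y).hasDerivAt
    · exact (hη.smooth'.continuous.integrable_of_hasCompactSupport hη.cs').integrableOn
    · apply tendsto_const_nhds.congr'
      filter_upwards [eventually_lt_atBot (-δ)] with y hy
      refine (hη.supp y ?_).symm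
      rw [lt_abs]; right; linarith
  rw [h2, h3, h4] at h1
  linarith

theorem Moll.sq_int (hη : Moll η δ) : 1 / (2 * δ) ≤ ∫ y, η y ^ 2 := by
  have hδ := hη.pos
  have hsq : Integrable (fun y => η y ^ 2) := by
    apply Continuous.integrable_of_hasCompactSupport (hη.smooth.continuous.pow 2)
    have h := hη.cs.mul_right (f' := η)
    rw [← pow_two] at h
    exact h
  obtain ⟨c, hc⟩ : ∃ c, c = 1 / (2 * δ) := ⟨_, rfl⟩
  have hc1 : 2 * δ * c = 1 := by rw [hc]; field_simp
  have hind : Integrable ((Icc (-δ) δ).indicator (fun _ : ℝ => c ^ 2)) :=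
    (integrable_indicator_iff measurableSet_Icc).2 (integrable_const _)
  have h1 : 0 ≤ ∫ y, (η y ^ 2 - 2 * c * η y + (Icc (-δ) δ).indicator (fun _ => c ^ 2) y) := by
    apply integral_nonneg
    intro y
    by_cases hy : y ∈ Icc (-δ) δ
    · simp only [indicator_of_mem hy, Pi.zero_apply]
      nlinarith [sq_nonneg (η y - c)]
    · have : η y = 0 := by
        apply hη.supp
        by_contra hc
        exact hy (abs_le.1 (not_lt.1 hc))
      simp [indicator_of_notMem hy, this]
  have h2 : ∫ y, (η y ^ 2 - 2 * c * η y + (Icc (-δ) δ).indicator (fun _ => c ^ 2) y)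
      = (∫ y, η y ^ 2) - 2 * c * 1 + 2 * δ * c ^ 2 := by
    have hs2 : Integrable (fun y => η y ^ 2 - 2 * c * η y) :=
      hsq.sub (hη.integrable.const_mul (2 * c))
    rw [integral_add hs2 hind,
      integral_sub hsq (hη.integrable.const_mul (2 * c)), integral_const_mul, hη.int,
      integral_indicator measurableSet_Icc, setIntegral_const,
      Real.volume_real_Icc_of_le (by linarith), smul_eq_mul]
    ring
  rw [h2] at h1
  rw [← hc]
  have : 2 * δ * c ^ 2 = c := by rw [pow_two, ← mul_assoc, hc1, one_mul]
  linarith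

end bounds
end WF

namespace WF

/-- Heaviside -/
def Hs (x : ℝ) : ℝ := if 0 ≤ x then 1 else 0

structure Coef (a A B : ℝ → ℝ) (Ca Cb : ℝ) : Prop where
  Ca0 : 0 ≤ Ca
  Cb0 : 0 ≤ Cb
  hA : ∀ u, HasDerivAt A (a u) u
  a0 : ∀ u, 0 ≤ a u
  a1 : ∀ u, a u ≤ Ca
  auc : UniformContinuous a
  A0 : A 0 = 0
  B0 : B 0 = 0
  strict : StrictMonoOn A (Icc 0 1)
  lipB : ∀ u v, |B u - B v| ≤ Cb * |u - v|

structure Sol (A B : ℝ → ℝ) (F : ℝ → ℝ → ℝ) : Prop where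
  mono : ∀ t, Monotone (F t)
  nonneg : ∀ t x, 0 ≤ F t x
  le_one : ∀ t x, F t x ≤ 1
  bot : ∀ t, Tendsto (F t) atBot (𝓝 0)
  top : ∀ t, Tendsto (F t) atTop (𝓝 1)
  meas : Measurable (uncurry F)
  cont : ∀ t0, ∀ᵐ x, ContinuousAt (fun t => F t x) t0
  int1 : ∀ t, Integrable (fun x => F t x - Hs x)
  int2 : ∀ t1 t2, 0 ≤ t1 → Integrable (fun q : ℝ × ℝ => F q.1 q.2 - Hs q.2)
    ((volume.restrict (Ioc t1 t2)).prod volume)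
  weak : ∀ ψ : ℝ → ℝ, ContDiff ℝ (⊤ : ℕ∞) ψ → HasCompactSupport ψ → ∀ t1 t2, 0 ≤ t1 → t1 ≤ t2 →
    (∫ x, ψ x * F t2 x) - (∫ x, ψ x * F t1 x) = ∫ s in t1..t2, ∫ x,
      ((1/2) * A (F s x) * deriv (deriv ψ) x + B (F s x) * deriv ψ x)

theorem Hs_mono : Monotone Hs := by
  intro x y h
  unfold Hs
  split_ifs <;> linarith

theorem Hs_meas : Measurable Hs := Hs_mono.measurable

theorem Hs_shift_int (r : ℝ) : Integrable (fun x => Hs (x + r) - Hs x) ∧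
    ∫ x, (Hs (x + r) - Hs x) = r := by
  rcases le_total 0 r with hr | hr
  · have e : (fun x => Hs (x + r) - Hs x) = (Ico (-r) 0).indicator (fun _ => (1:ℝ)) := by
      ext x
      unfold Hs
      simp only [indicator, mem_Ico]
      split_ifs <;> first | (exfalso; grind) | norm_num
    rw [e]
    constructor
    · exact (integrable_indicator_iff measurableSet_Ico).2 (integrable_const _)
    · rw [integral_indicator measurableSet_Ico, setIntegral_const,
        Real.volume_real_Ico_of_le (by linarith)]; simp
  · have e : (fun x => Hs (x + r) - Hs x) = (Ico 0 (-r)).indicator (fun _ => (-1:ℝ)) := by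
      ext x
      unfold Hs
      simp only [indicator, mem_Ico]
      split_ifs <;> first | (exfalso; grind) | norm_num
    rw [e]
    constructor
    · exact (integrable_indicator_iff measurableSet_Ico).2 (integrable_const _)
    · rw [integral_indicator measurableSet_Ico, setIntegral_const,
        Real.volume_real_Ico_of_le (by linarith)]; simp

variable {a A B : ℝ → ℝ} {Ca Cb : ℝ} {F G : ℝ → ℝ → ℝ} {η : ℝ → ℝ} {δ : ℝ}

theorem Coef.Amono (h : Coef a A B Ca Cb) : Monotone A :=
  monotone_of_hasDerivAt_nonneg h.hA h.a0

theorem Coef.Acont (h : Coef a A B Ca Cb) : Continuous A :=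
  continuous_iff_continuousAt.2 fun u => (h.hA u).continuousAt

theorem Coef.Bcont (h : Coef a A B Ca Cb) : Continuous B := by
  apply (LipschitzWith.of_dist_le_mul (K := ⟨Cb, h.Cb0⟩) (f := B) ?_).continuous
  intro u v
  exact h.lipB u v

theorem Coef.CaMono (h : Coef a A B Ca Cb) : Monotone (fun u => Ca * u - A u) :=
  monotone_of_hasDerivAt_nonneg (f' := fun u => Ca - a u) (fun u => by
    have := ((hasDerivAt_id u).const_mul Ca).sub (h.hA u)
    rw [mul_one] at this
    exact this) (fun u => by
    have := h.a1 u; simp; linarith)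

theorem Coef.Anonneg (h : Coef a A B Ca Cb) {u : ℝ} (hu : 0 ≤ u) : 0 ≤ A u := by
  have := h.Amono hu; rwa [h.A0] at this

theorem Coef.Aabs (h : Coef a A B Ca Cb) {u : ℝ} (hu : 0 ≤ u) (hu1 : u ≤ 1) : |A u| ≤ Ca := by
  rw [abs_of_nonneg (h.Anonneg hu)]
  have := h.CaMono hu
  simp only [h.A0] at this
  nlinarith [h.Ca0]

theorem Coef.Babs (h : Coef a A B Ca Cb) {u : ℝ} (hu : 0 ≤ u) (hu1 : u ≤ 1) : |B u| ≤ Cb := by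
  have := h.lipB u 0
  rw [h.B0, sub_zero, sub_zero, abs_of_nonneg hu] at this
  nlinarith [h.Cb0]

theorem Sol.abs (hF : Sol A B F) (t x : ℝ) : |F t x| ≤ 1 := by
  rw [abs_of_nonneg (hF.nonneg t x)]; exact hF.le_one t x

theorem Sol.shift (hF : Sol A B F) (r : ℝ) : Sol A B (fun t x => F t (x + r)) where
  mono t x y h := hF.mono t (by linarith)
  nonneg t x := hF.nonneg _ _
  le_one t x := hF.le_one _ _
  bot t := (hF.bot t).comp (tendsto_atBot_add_const_right _ r tendsto_id)
  top t := (hF.top t).comp (tendsto_atTop_add_const_right _ r tendsto_id)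
  meas := hF.meas.comp (measurable_fst.prodMk (measurable_snd.add_const r))
  cont t0 := (measurePreserving_add_right volume r).quasiMeasurePreserving.ae (hF.cont t0)
  int1 t := by
    have h1 := ((hF.int1 t).comp_add_right r).add (Hs_shift_int r).1
    refine h1.congr (Eventually.of_forall fun x => ?_)
    simp
  int2 t1 t2 ht := by
    have mp : MeasurePreserving (fun q : ℝ × ℝ => (q.1, q.2 + r))
        ((volume.restrict (Ioc t1 t2)).prod volume) ((volume.restrict (Ioc t1 t2)).prod volume) :=
      (MeasurePreserving.id _).prod (measurePreserving_add_right volume r)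
    have h1 := mp.integrable_comp_of_integrable (hF.int2 t1 t2 ht)
    have h2 := (Hs_shift_int r).1.comp_snd (μ := volume.restrict (Ioc t1 t2))
    refine (h1.add h2).congr (Eventually.of_forall fun x => ?_)
    simp
  weak ψ hψ hc t1 t2 h1 h2 := by
    have hψ' : ContDiff ℝ (⊤ : ℕ∞) (fun x => ψ (x - r)) := hψ.comp (contDiff_id.sub contDiff_const)
    have hc' : HasCompactSupport (fun x => ψ (x - r)) :=
      hc.comp_homeomorph (Homeomorph.subRight r)
    have := hF.weak _ hψ' hc' t1 t2 h1 h2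
    have d1 : deriv (fun x => ψ (x - r)) = fun x => deriv ψ (x - r) := by
      ext x; exact deriv_comp_sub_const ..
    have d2 : deriv (fun x => deriv ψ (x - r)) = fun x => deriv (deriv ψ) (x - r) := by
      ext x; exact deriv_comp_sub_const ..
    rw [d1, d2] at this
    have e : ∀ (f : ℝ → ℝ → ℝ), (∫ x, f (x - r) x) = ∫ x, f x (x + r) := by
      intro f
      rw [← integral_add_right_eq_self (fun x => f (x - r) x) r]
      simp
    rw [e (fun x y => ψ x * F t2 y), e (fun x y => ψ x * F t1 y)] at this
    rw [this]
    congr 1; ext s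
    exact e (fun x y => (1/2) * A (F s y) * deriv (deriv ψ) x + B (F s y) * deriv ψ x)

theorem mol_eq (κ h : ℝ → ℝ) (x : ℝ) : mol κ h x = ∫ z, κ (x - z) * h z := by
  unfold mol
  rw [← integral_sub_left_eq_self _ volume x]
  simp

theorem Sol.mol_continuous (hF : Sol A B F) {κ Φ : ℝ → ℝ} (hκ : Continuous κ)
    (hc : HasCompactSupport κ) (hΦ : Continuous Φ) {C : ℝ}
    (hC : ∀ u, 0 ≤ u → u ≤ 1 → |Φ u| ≤ C) :
    Continuous (fun q : ℝ × ℝ => mol κ (fun z => Φ (F q.1 z)) q.2) := by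
  rw [continuous_iff_continuousAt]
  rintro ⟨t0, x0⟩
  simp_rw [mol_eq]
  obtain ⟨M, hM⟩ : ∃ M, ∀ x, ‖κ x‖ ≤ M := hκ.bounded_above_of_compact_support hc
  obtain ⟨R, hR⟩ := hc.isCompact.isBounded.subset_closedBall 0
  have hM0 : 0 ≤ M := (norm_nonneg _).trans (hM 0)
  have hC0 : 0 ≤ C := (abs_nonneg _).trans (hC 0 le_rfl zero_le_one)
  apply continuousAt_of_dominated
    (bound := (Icc (x0 - 1 - R) (x0 + 1 + R)).indicator (fun _ => M * C))
  · refine Eventually.of_forall fun q => ?_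
    have : Measurable (F q.1) := (hF.mono q.1).measurable
    exact (hκ.measurable.comp (measurable_const.sub measurable_id)).aestronglyMeasurable.mul
      (hΦ.measurable.comp this).aestronglyMeasurable
  · have : ∀ᶠ q : ℝ × ℝ in 𝓝 (t0, x0), |q.2 - x0| < 1 := by
      have : Tendsto (fun q : ℝ × ℝ => |q.2 - x0|) (𝓝 (t0, x0)) (𝓝 |x0 - x0|) :=
        ((continuous_snd.sub continuous_const).abs).continuousAt
      rw [sub_self, abs_zero] at this
      exact this.eventually_lt_const zero_lt_one
    filter_upwards [this] with q hq
    refine Eventually.of_forall fun z => ?_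
    by_cases hz : z ∈ Icc (x0 - 1 - R) (x0 + 1 + R)
    · rw [indicator_of_mem hz, norm_mul]
      exact mul_le_mul (hM _) (hC _ (hF.nonneg _ _) (hF.le_one _ _)) (norm_nonneg _) hM0
    · rw [indicator_of_notMem hz]
      have : κ (q.2 - z) = 0 := by
        by_contra hne
        have h1 := hR (subset_tsupport _ (mem_support.2 hne))
        rw [mem_closedBall_zero_iff, Real.norm_eq_abs, abs_le] at h1
        rw [abs_lt] at hq
        exact hz ⟨by linarith, by linarith⟩
      simp [this]
  · exact (integrable_indicator_iff measurableSet_Icc).2 (integrable_const _)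
  · filter_upwards [hF.cont t0] with z hz
    apply ContinuousAt.mul
    · exact (hκ.comp (continuous_snd.sub continuous_const)).continuousAt
    · apply hΦ.continuousAt.comp
      exact ContinuousAt.comp (f := Prod.fst) (g := fun t => F t z) (x := (t0, x0)) hz
        continuousAt_fst

def mF (η : ℝ → ℝ) (F : ℝ → ℝ → ℝ) (t x : ℝ) : ℝ := mol η (F t) x
def mp (η : ℝ → ℝ) (F : ℝ → ℝ → ℝ) (t x : ℝ) : ℝ := mol (deriv η) (F t) x
def mw (η : ℝ → ℝ) (A : ℝ → ℝ) (F : ℝ → ℝ → ℝ) (t x : ℝ) : ℝ :=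
  mol (deriv η) (fun z => A (F t z)) x
def mB (η : ℝ → ℝ) (B : ℝ → ℝ) (F : ℝ → ℝ → ℝ) (t x : ℝ) : ℝ := mol η (fun z => B (F t z)) x
def mJ (η : ℝ → ℝ) (A B : ℝ → ℝ) (F : ℝ → ℝ → ℝ) (t x : ℝ) : ℝ :=
  (1/2) * mw η A F t x - mB η B F t x
def mK (η : ℝ → ℝ) (A B : ℝ → ℝ) (F : ℝ → ℝ → ℝ) (t x : ℝ) : ℝ :=
  (1/2) * mol (deriv (deriv η)) (fun z => A (F t z)) x - mol (deriv η) (fun z => B (F t z)) x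

theorem mF_shift (r t x : ℝ) : mF η (fun t x => F t (x + r)) t x = mF η F t (x + r) :=
  mol_comp_add r x
theorem mp_shift (r t x : ℝ) : mp η (fun t x => F t (x + r)) t x = mp η F t (x + r) :=
  mol_comp_add r x
theorem mw_shift (r t x : ℝ) : mw η A (fun t x => F t (x + r)) t x = mw η A F t (x + r) :=
  mol_comp_add (h := fun z => A (F t z)) r x
theorem mB_shift (r t x : ℝ) : mB η B (fun t x => F t (x + r)) t x = mB η B F t (x + r) :=
  mol_comp_add (h := fun z => B (F t z)) r x
theorem mJ_shift (r t x : ℝ) : mJ η A B (fun t x => F t (x + r)) t x = mJ η A B F t (x + r) := by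
  unfold mJ; rw [mw_shift, mB_shift]

theorem mF_cont (hF : Sol A B F) (hη : Moll η δ) :
    Continuous (fun q : ℝ × ℝ => mF η F q.1 q.2) :=
  hF.mol_continuous (Φ := fun u => u) (C := 1) hη.smooth.continuous hη.cs continuous_id
    (fun u h0 h1 => by rwa [abs_of_nonneg h0])

theorem mp_cont (hF : Sol A B F) (hη : Moll η δ) :
    Continuous (fun q : ℝ × ℝ => mp η F q.1 q.2) :=
  hF.mol_continuous (Φ := fun u => u) (C := 1) hη.smooth'.continuous hη.cs' continuous_id
    (fun u h0 h1 => by rwa [abs_of_nonneg h0])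

theorem mw_cont (hc : Coef a A B Ca Cb) (hF : Sol A B F) (hη : Moll η δ) :
    Continuous (fun q : ℝ × ℝ => mw η A F q.1 q.2) :=
  hF.mol_continuous hη.smooth'.continuous hη.cs' hc.Acont (fun _ h0 h1 => hc.Aabs h0 h1)

theorem mB_cont (hc : Coef a A B Ca Cb) (hF : Sol A B F) (hη : Moll η δ) :
    Continuous (fun q : ℝ × ℝ => mB η B F q.1 q.2) :=
  hF.mol_continuous hη.smooth.continuous hη.cs hc.Bcont (fun _ h0 h1 => hc.Babs h0 h1)

theorem mJ_cont (hc : Coef a A B Ca Cb) (hF : Sol A B F) (hη : Moll η δ) :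
    Continuous (fun q : ℝ × ℝ => mJ η A B F q.1 q.2) :=
  (continuous_const.mul (mw_cont hc hF hη)).sub (mB_cont hc hF hη)

theorem mK_cont (hc : Coef a A B Ca Cb) (hF : Sol A B F) (hη : Moll η δ) :
    Continuous (fun q : ℝ × ℝ => mK η A B F q.1 q.2) :=
  (continuous_const.mul (hF.mol_continuous hη.smooth''.continuous hη.cs'' hc.Acont
    (fun _ h0 h1 => hc.Aabs h0 h1))).sub
  (hF.mol_continuous hη.smooth'.continuous hη.cs' hc.Bcont (fun _ h0 h1 => hc.Babs h0 h1))

theorem Sol.meas_t (hF : Sol A B F) (t : ℝ) : Measurable (F t) := (hF.mono t).measurable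

theorem mF_deriv (hF : Sol A B F) (hη : Moll η δ) (t x : ℝ) :
    HasDerivAt (mF η F t) (mp η F t x) x :=
  mol_hasDerivAt hη.smooth hη.cs (hF.meas_t t) (hF.abs t) x

theorem mJ_deriv (hc : Coef a A B Ca Cb) (hF : Sol A B F) (hη : Moll η δ) (t x : ℝ) :
    HasDerivAt (mJ η A B F t) (mK η A B F t x) x := by
  have h1 := mol_hasDerivAt hη.smooth' hη.cs' (hc.Acont.measurable.comp (hF.meas_t t))
    (C := Ca) (fun z => hc.Aabs (hF.nonneg t z) (hF.le_one t z)) x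
  have h2 := mol_hasDerivAt hη.smooth hη.cs (hc.Bcont.measurable.comp (hF.meas_t t))
    (C := Cb) (fun z => hc.Babs (hF.nonneg t z) (hF.le_one t z)) x
  exact (h1.const_mul (1/2)).sub h2

theorem mF_nonneg (hF : Sol A B F) (hη : Moll η δ) (t x : ℝ) : 0 ≤ mF η F t x :=
  hη.le_mol (hF.meas_t t) (hF.abs t) x 0 (fun _ _ => hF.nonneg _ _)

theorem mF_le_one (hF : Sol A B F) (hη : Moll η δ) (t x : ℝ) : mF η F t x ≤ 1 :=
  hη.mol_le (hF.meas_t t) (hF.abs t) x 1 (fun _ _ => hF.le_one _ _)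

theorem mF_le (hF : Sol A B F) (hη : Moll η δ) (t x : ℝ) : mF η F t x ≤ F t (x + δ) :=
  hη.mol_le (hF.meas_t t) (hF.abs t) x _ (fun _ hz => hF.mono t hz.2)

theorem le_mF (hF : Sol A B F) (hη : Moll η δ) (t x : ℝ) : F t (x - δ) ≤ mF η F t x :=
  hη.le_mol (hF.meas_t t) (hF.abs t) x _ (fun _ hz => hF.mono t hz.1)

theorem mp_nonneg (hF : Sol A B F) (hη : Moll η δ) (t x : ℝ) : 0 ≤ mp η F t x :=
  hη.deriv_nonneg x ((hF.mono t).monotoneOn _)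

theorem mw_nonneg (hc : Coef a A B Ca Cb) (hF : Sol A B F) (hη : Moll η δ) (t x : ℝ) :
    0 ≤ mw η A F t x :=
  hη.deriv_nonneg x ((hc.Amono.comp (hF.mono t)).monotoneOn _)

/-- linear combination `c * p - w` -/
theorem mpw_sub (hc : Coef a A B Ca Cb) (hF : Sol A B F) (hη : Moll η δ) (c t x : ℝ) :
    mol (deriv η) (fun z => c * F t z - A (F t z)) x = c * mp η F t x - mw η A F t x := by
  rw [mol_sub (h := fun z => c * F t z) (g := fun z => A (F t z)) hη.smooth'.continuous hη.cs'
    ((hF.meas_t t).const_mul c) (C := |c| * 1) ?_ (hc.Acont.measurable.comp (hF.meas_t t))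
    (C' := Ca) ?_, mol_smul]
  · rfl
  · intro z; rw [abs_mul]; exact mul_le_mul_of_nonneg_left (hF.abs t z) (abs_nonneg c)
  · exact fun z => hc.Aabs (hF.nonneg t z) (hF.le_one t z)

theorem mw_le (hc : Coef a A B Ca Cb) (hF : Sol A B F) (hη : Moll η δ) (t x : ℝ) :
    mw η A F t x ≤ Ca * mp η F t x := by
  have := hη.deriv_nonneg x ((hc.CaMono.comp (hF.mono t)).monotoneOn _)
  have h2 := mpw_sub hc hF hη Ca t x
  have h3 : mol (deriv η) ((fun u => Ca * u - A u) ∘ F t) x =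
    mol (deriv η) (fun z => Ca * F t z - A (F t z)) x := rfl
  linarith

theorem mB_abs (hc : Coef a A B Ca Cb) (hF : Sol A B F) (hη : Moll η δ) (t x : ℝ) :
    |mB η B F t x| ≤ Cb := by
  have hm := hc.Bcont.measurable.comp (hF.meas_t t)
  have hb : ∀ z, |B (F t z)| ≤ Cb := fun z => hc.Babs (hF.nonneg t z) (hF.le_one t z)
  exact abs_le.2 ⟨hη.le_mol hm hb x _ (fun z _ => (abs_le.1 (hb z)).1),
    hη.mol_le hm hb x _ (fun z _ => (abs_le.1 (hb z)).2)⟩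

/-- uniform bounds -/
theorem mp_bdd (hF : Sol A B F) (hη : Moll η δ) : ∃ C, 0 ≤ C ∧ ∀ t x, |mp η F t x| ≤ C :=
  ⟨1 * ∫ y, |deriv η y|, by positivity,
    fun t x => mol_abs_le hη.smooth'.continuous hη.cs' (hF.abs t) x⟩

theorem mJ_bdd (hc : Coef a A B Ca Cb) (hF : Sol A B F) (hη : Moll η δ) :
    ∃ C, 0 ≤ C ∧ ∀ t x, |mJ η A B F t x| ≤ C := by
  obtain ⟨C, hC, h⟩ := mp_bdd hF hη
  have := hc.Ca0
  have := hc.Cb0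
  refine ⟨1/2 * (Ca * C) + Cb, by positivity, fun t x => ?_⟩
  have h1 := mw_nonneg hc hF hη t x
  have h2 := mw_le hc hF hη t x
  have h3 := abs_le.1 (mB_abs hc hF hη t x)
  have h4 := (abs_le.1 (h t x)).2
  have h5 : Ca * mp η F t x ≤ Ca * C := mul_le_mul_of_nonneg_left h4 hc.Ca0
  unfold mJ
  rw [abs_le]; constructor <;> linarith

theorem mK_bdd (hc : Coef a A B Ca Cb) (hF : Sol A B F) (hη : Moll η δ) :
    ∃ C, 0 ≤ C ∧ ∀ t x, |mK η A B F t x| ≤ C := by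
  have := hc.Ca0
  have := hc.Cb0
  refine ⟨1/2 * (Ca * ∫ y, |deriv (deriv η) y|) + Cb * ∫ y, |deriv η y|, by positivity, fun t x => ?_⟩
  have h1 := abs_le.1 (mol_abs_le (h := fun z => A (F t z)) hη.smooth''.continuous hη.cs''
    (fun z => hc.Aabs (hF.nonneg t z) (hF.le_one t z)) x)
  have h2 := abs_le.1 (mol_abs_le (h := fun z => B (F t z)) hη.smooth'.continuous hη.cs'
    (fun z => hc.Babs (hF.nonneg t z) (hF.le_one t z)) x)
  unfold mK
  rw [abs_le]; constructor <;> linarith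

/-- `∫ (F(x+r) - F(x)) dx = r` -/
theorem Sol.int_shift (hF : Sol A B F) (t r : ℝ) : Integrable (fun x => F t (x + r) - F t x) ∧
    ∫ x, (F t (x + r) - F t x) = r := by
  have h1 := hF.int1 t
  have h2 := h1.comp_add_right r
  have h3 := (Hs_shift_int r)
  have e : (fun x => F t (x + r) - F t x) = fun x => ((F t (x + r) - Hs (x + r)) - (F t x - Hs x)) +
      (Hs (x + r) - Hs x) := by ext x; ring
  have h4 : Integrable (fun x => (F t (x + r) - Hs (x + r)) - (F t x - Hs x)) := h2.sub h1
  rw [e]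
  refine ⟨h4.add h3.1, ?_⟩
  rw [integral_add h4 h3.1, integral_sub h2 h1, h3.2,
    integral_add_right_eq_self (fun x => F t x - Hs x) r]
  ring

theorem mp_int (hF : Sol A B F) (hη : Moll η δ) (t : ℝ) :
    Integrable (mp η F t) ∧ ∫ x, mp η F t x = 1 := by
  have hb : Tendsto (mF η F t) atBot (𝓝 0) := by
    apply squeeze_zero (mF_nonneg hF hη t) (mF_le hF hη t)
    exact (hF.bot t).comp (tendsto_atBot_add_const_right _ δ tendsto_id)
  have ht : Tendsto (mF η F t) atTop (𝓝 1) := by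
    refine tendsto_of_tendsto_of_tendsto_of_le_of_le ?_ tendsto_const_nhds (le_mF hF hη t)
      (mF_le_one hF hη t)
    exact (hF.top t).comp (tendsto_atTop_add_const_right _ (-δ) tendsto_id)
  have hi : Integrable (mp η F t) := by
    rw [← integrableOn_univ, ← Iic_union_Ioi (a := (0:ℝ))]
    refine IntegrableOn.union ?_ ?_
    · have hcp : Continuous (mp η F t) :=
        (mp_cont hF hη).comp (continuous_const.prodMk continuous_id)
      refine integrableOn_Iic_of_intervalIntegral_norm_bounded (l := atBot) (a := fun i : ℝ => i)
        1 0 (fun i => (hcp.integrableOn_Icc).mono_set Ioc_subset_Icc_self) tendsto_id ?_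
      refine Eventually.of_forall fun i => ?_
      have : ∀ x, ‖mp η F t x‖ = mp η F t x := fun x =>
        Real.norm_of_nonneg (mp_nonneg hF hη t x)
      simp_rw [this]
      rw [intervalIntegral.integral_eq_sub_of_hasDerivAt (fun x _ => mF_deriv hF hη t x)
        (hcp.intervalIntegrable _ _)]
      linarith [mF_nonneg hF hη t i, mF_le_one hF hη t 0]
    · exact integrableOn_Ioi_deriv_of_nonneg' (fun x _ => mF_deriv hF hη t x)
        (fun x _ => mp_nonneg hF hη t x) ht
  refine ⟨hi, ?_⟩
  rw [integral_of_hasDerivAt_of_tendsto (fun x => mF_deriv hF hη t x) hi hb ht]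
  norm_num

/-- time increment of the mollified solution -/
theorem mF_time (hc : Coef a A B Ca Cb) (hF : Sol A B F) (hη : Moll η δ) (t1 t2 x : ℝ)
    (h1 : 0 ≤ t1) (h2 : t1 ≤ t2) :
    mF η F t2 x - mF η F t1 x = ∫ s in t1..t2, mK η A B F s x := by
  have hs : ContDiff ℝ (⊤ : ℕ∞) (fun z => η (x - z)) :=
    hη.smooth.comp (contDiff_const.sub contDiff_id)
  have hcs : HasCompactSupport (fun z => η (x - z)) :=
    hη.cs.comp_homeomorph (Homeomorph.subLeft x)
  have := hF.weak _ hs hcs t1 t2 h1 h2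
  have d1 : deriv (fun z => η (x - z)) = fun z => - deriv η (x - z) := by
    ext z; exact deriv_comp_const_sub ..
  have d2 : deriv (fun z => - deriv η (x - z)) = fun z => deriv (deriv η) (x - z) := by
    ext z
    have := deriv_comp_const_sub (f := deriv η) (a := x) (x := z)
    rw [show (fun z => - deriv η (x - z)) = - (fun z => deriv η (x - z)) from rfl, deriv.neg,
      this, neg_neg]
  rw [d1, d2, ← mol_eq, ← mol_eq] at this
  unfold mF
  rw [this]
  congr 1; ext s
  unfold mK
  rw [mol_eq, mol_eq, ← integral_const_mul, ← integral_sub]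
  · congr 1; ext z; ring
  · have := mol_integrable (h := fun z => A (F s z)) hη.smooth''.continuous hη.cs''
      (hc.Acont.measurable.comp (hF.meas_t s))
      (fun z => hc.Aabs (hF.nonneg s z) (hF.le_one s z)) x
    have := this.comp_sub_left x
    simp only [sub_sub_cancel] at this
    exact this.const_mul _
  · have := mol_integrable (h := fun z => B (F s z)) hη.smooth'.continuous hη.cs'
      (hc.Bcont.measurable.comp (hF.meas_t s))
      (fun z => hc.Babs (hF.nonneg s z) (hF.le_one s z)) x
    have := this.comp_sub_left x
    simpa only [sub_sub_cancel] using this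

theorem mF_time_deriv (hc : Coef a A B Ca Cb) (hF : Sol A B F) (hη : Moll η δ) (t x : ℝ)
    (ht : 0 < t) : HasDerivAt (fun s => mF η F s x) (mK η A B F t x) t := by
  have hk : Continuous (fun s => mK η A B F s x) :=
    (mK_cont hc hF hη).comp (continuous_id.prodMk continuous_const)
  have h1 : HasDerivAt (fun u => mF η F 0 x + ∫ s in (0:ℝ)..u, mK η A B F s x) (mK η A B F t x) t :=
    (intervalIntegral.integral_hasDerivAt_right (hk.intervalIntegrable _ _)
      hk.aestronglyMeasurable.stronglyMeasurableAtFilter hk.continuousAt).const_add _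
  apply h1.congr_of_eventuallyEq
  filter_upwards [lt_mem_nhds ht] with u hu
  rw [← mF_time hc hF hη 0 u x le_rfl hu.le]; ring

end WF

namespace WF
variable {a A B : ℝ → ℝ} {Ca Cb : ℝ} {F G : ℝ → ℝ → ℝ} {η : ℝ → ℝ} {δ : ℝ}
variable {θ θ' θ'' : ℝ → ℝ} {L : ℝ}

structure Th (θ θ' θ'' : ℝ → ℝ) (L : ℝ) : Prop where
  d1 : ∀ u, HasDerivAt θ (θ' u) u
  d2 : ∀ u, HasDerivAt θ' (θ'' u) u
  cont : Continuous θ''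
  z0 : θ 0 = 0
  z1 : θ' 0 = 0
  nn : ∀ u, 0 ≤ θ'' u
  bd : ∀ u, θ'' u ≤ L

theorem Th.L0 (h : Th θ θ' θ'' L) : 0 ≤ L := (h.nn 0).trans (h.bd 0)

theorem Th.c1 (h : Th θ θ' θ'' L) : Continuous θ' :=
  continuous_iff_continuousAt.2 fun u => (h.d2 u).continuousAt

theorem Th.c0 (h : Th θ θ' θ'' L) : Continuous θ :=
  continuous_iff_continuousAt.2 fun u => (h.d1 u).continuousAt

theorem Th.lin1 (h : Th θ θ' θ'' L) (u : ℝ) : |θ' u| ≤ L * |u| := by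
  have := (convex_univ (𝕜 := ℝ) (E := ℝ)).norm_image_sub_le_of_norm_hasDerivWithin_le (f := θ')
    (f' := θ'') (C := L)
    (fun x _ => (h.d2 x).hasDerivWithinAt)
    (fun x _ => by rw [Real.norm_of_nonneg (h.nn x)]; exact h.bd x) (mem_univ 0) (mem_univ u)
  simpa [h.z1] using this

theorem Th.lin0 (h : Th θ θ' θ'' L) (u : ℝ) (hu : |u| ≤ 1) : |θ u| ≤ L * |u| := by
  have := (convex_Icc (-1:ℝ) 1).norm_image_sub_le_of_norm_hasDerivWithin_le (f := θ)
    (f' := θ') (C := L)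
    (fun x _ => (h.d1 x).hasDerivWithinAt)
    (fun x hx => by
      have h1 := h.lin1 x
      have h2 : |x| ≤ 1 := abs_le.2 hx
      rw [Real.norm_eq_abs]
      nlinarith [h.L0]) (show (0:ℝ) ∈ _ by constructor <;> norm_num) (abs_le.1 hu)
  simpa [h.z0] using this

theorem mF_Hs_le (hF : Sol A B F) (hη : Moll η δ) (t x : ℝ) :
    ‖mF η F t x - Hs x‖ ≤ ‖|F t (x + δ) - Hs x| + |F t (x + -δ) - Hs x|‖ := by
  have h1 := mF_le hF hη t x
  have h2 := le_mF hF hη t x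
  rw [Real.norm_eq_abs, Real.norm_of_nonneg (by positivity), ← sub_eq_add_neg]
  rw [abs_le]
  constructor
  · linarith [neg_abs_le (F t (x - δ) - Hs x), abs_nonneg (F t (x + δ) - Hs x)]
  · linarith [abs_nonneg (F t (x - δ) - Hs x), le_abs_self (F t (x + δ) - Hs x)]

theorem mF_int1 (hF : Sol A B F) (hη : Moll η δ) (t : ℝ) :
    Integrable (fun x => mF η F t x - Hs x) := by
  refine Integrable.mono (((hF.shift δ).int1 t).abs.add ((hF.shift (-δ)).int1 t).abs) ?_ ?_
  · exact (((mF_cont hF hη).comp (continuous_const.prodMk continuous_id)).measurable.sub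
      Hs_meas).aestronglyMeasurable
  · exact Eventually.of_forall fun x => mF_Hs_le hF hη t x

theorem mF_int2 (hF : Sol A B F) (hη : Moll η δ) (t1 t2 : ℝ) (h1 : 0 ≤ t1) :
    Integrable (fun q : ℝ × ℝ => mF η F q.1 q.2 - Hs q.2)
      ((volume.restrict (Ioc t1 t2)).prod volume) := by
  refine Integrable.mono (((hF.shift δ).int2 t1 t2 h1).abs.add
    ((hF.shift (-δ)).int2 t1 t2 h1).abs) ?_ ?_
  · exact ((mF_cont hF hη).measurable.sub (Hs_meas.comp measurable_snd)).aestronglyMeasurable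
  · exact Eventually.of_forall fun q => mF_Hs_le hF hη q.1 q.2

def mD (η : ℝ → ℝ) (F G : ℝ → ℝ → ℝ) (t x : ℝ) : ℝ := mF η F t x - mF η G t x

theorem mD_cont (hF : Sol A B F) (hG : Sol A B G) (hη : Moll η δ) :
    Continuous (fun q : ℝ × ℝ => mD η F G q.1 q.2) :=
  (mF_cont hF hη).sub (mF_cont hG hη)

theorem mD_int1 (hF : Sol A B F) (hG : Sol A B G) (hη : Moll η δ) (t : ℝ) :
    Integrable (fun x => mD η F G t x) := by
  refine ((mF_int1 hF hη t).sub (mF_int1 hG hη t)).congr (Eventually.of_forall fun x => ?_)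
  simp [mD]

theorem mD_int2 (hF : Sol A B F) (hG : Sol A B G) (hη : Moll η δ) (t1 t2 : ℝ) (h1 : 0 ≤ t1) :
    Integrable (fun q : ℝ × ℝ => mD η F G q.1 q.2)
      ((volume.restrict (Ioc t1 t2)).prod volume) := by
  refine ((mF_int2 hF hη t1 t2 h1).sub (mF_int2 hG hη t1 t2 h1)).congr
    (Eventually.of_forall fun x => ?_)
  simp [mD]

theorem mD_abs (hF : Sol A B F) (hG : Sol A B G) (hη : Moll η δ) (t x : ℝ) :
    |mD η F G t x| ≤ 1 := by
  unfold mD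
  rw [abs_le]
  constructor <;> linarith [mF_nonneg hF hη t x, mF_nonneg hG hη t x, mF_le_one hF hη t x,
    mF_le_one hG hη t x]

theorem mD_deriv (hF : Sol A B F) (hG : Sol A B G) (hη : Moll η δ) (t x : ℝ) :
    HasDerivAt (mD η F G t) (mp η F t x - mp η G t x) x :=
  (mF_deriv hF hη t x).sub (mF_deriv hG hη t x)

/-- integrand of the dissipation -/
def Xi (θ'' : ℝ → ℝ) (η : ℝ → ℝ) (A B : ℝ → ℝ) (F G : ℝ → ℝ → ℝ) (t x : ℝ) : ℝ :=
  -(θ'' (mD η F G t x) * (mp η F t x - mp η G t x) * (mJ η A B F t x - mJ η A B G t x))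

theorem cont_snd {f : ℝ × ℝ → ℝ} (hf : Continuous f) (t : ℝ) : Continuous (fun x => f (t, x)) :=
  hf.comp (continuous_const.prodMk continuous_id)

theorem Xi_cont (hc : Coef a A B Ca Cb) (hθ : Th θ θ' θ'' L) (hF : Sol A B F) (hG : Sol A B G)
    (hη : Moll η δ) : Continuous (fun q : ℝ × ℝ => Xi θ'' η A B F G q.1 q.2) :=
  (((hθ.cont.comp (mD_cont hF hG hη)).mul ((mp_cont hF hη).sub (mp_cont hG hη))).mul
    ((mJ_cont hc hF hη).sub (mJ_cont hc hG hη))).neg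

theorem Xi_abs (hc : Coef a A B Ca Cb) (hθ : Th θ θ' θ'' L) (hF : Sol A B F) (hG : Sol A B G)
    (hη : Moll η δ) : ∃ C, 0 ≤ C ∧ ∀ t x, |Xi θ'' η A B F G t x| ≤
      C * (mp η F t x + mp η G t x) := by
  obtain ⟨C1, h10, h1⟩ := mJ_bdd hc hF hη
  obtain ⟨C2, h20, h2⟩ := mJ_bdd hc hG hη
  have hL := hθ.L0
  refine ⟨L * (C1 + C2), by positivity, fun t x => ?_⟩
  have p0 := mp_nonneg hF hη t x
  have q0 := mp_nonneg hG hη t x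
  unfold Xi
  rw [abs_neg, abs_mul, abs_mul]
  have e1 : |θ'' (mD η F G t x)| ≤ L := by rw [abs_of_nonneg (hθ.nn _)]; exact hθ.bd _
  have e2 : |mp η F t x - mp η G t x| ≤ mp η F t x + mp η G t x := by
    rw [abs_le]; constructor <;> linarith
  have e3 : |mJ η A B F t x - mJ η A B G t x| ≤ C1 + C2 :=
    (abs_sub _ _).trans (add_le_add (h1 t x) (h2 t x))
  calc _ ≤ (L * (mp η F t x + mp η G t x)) * (C1 + C2) := by gcongr
    _ = _ := by ring

theorem Xi_int (hc : Coef a A B Ca Cb) (hθ : Th θ θ' θ'' L) (hF : Sol A B F) (hG : Sol A B G)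
    (hη : Moll η δ) (t : ℝ) : Integrable (fun x => Xi θ'' η A B F G t x) := by
  obtain ⟨C, hC, h⟩ := Xi_abs hc hθ hF hG hη
  refine Integrable.mono' (((mp_int hF hη t).1.add (mp_int hG hη t).1).const_mul C) ?_
    (Eventually.of_forall fun x => h t x)
  exact (cont_snd (Xi_cont hc hθ hF hG hη) t).aestronglyMeasurable

theorem theta_int (hθ : Th θ θ' θ'' L) (hF : Sol A B F) (hG : Sol A B G)
    (hη : Moll η δ) (t : ℝ) : Integrable (fun x => θ (mD η F G t x)) := by
  refine Integrable.mono' ((mD_int1 hF hG hη t).abs.const_mul L) ?_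
    (Eventually.of_forall fun x => hθ.lin0 _ (mD_abs hF hG hη t x))
  exact (hθ.c0.comp (cont_snd (mD_cont hF hG hη) t)).aestronglyMeasurable

theorem GI (hc : Coef a A B Ca Cb) (hθ : Th θ θ' θ'' L) (hF : Sol A B F) (hG : Sol A B G)
    (hη : Moll η δ) (t1 t2 : ℝ) (h1 : 0 ≤ t1) (h2 : t1 ≤ t2) :
    (∫ x, θ (mD η F G t2 x)) - ∫ x, θ (mD η F G t1 x) =
      ∫ s in t1..t2, ∫ x, Xi θ'' η A B F G s x := by
  obtain ⟨C1, h10, hk1⟩ := mK_bdd hc hF hη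
  obtain ⟨C2, h20, hk2⟩ := mK_bdd hc hG hη
  have hL := hθ.L0
  have kc : Continuous (fun q : ℝ × ℝ => mK η A B F q.1 q.2 - mK η A B G q.1 q.2) :=
    (mK_cont hc hF hη).sub (mK_cont hc hG hη)
  have kb : ∀ t x, |mK η A B F t x - mK η A B G t x| ≤ C1 + C2 := fun t x =>
    (abs_sub _ _).trans (add_le_add (hk1 t x) (hk2 t x))
  have dc := mD_cont hF hG hη
  have gc : Continuous (fun q : ℝ × ℝ => θ' (mD η F G q.1 q.2) *
      (mK η A B F q.1 q.2 - mK η A B G q.1 q.2)) := (hθ.c1.comp dc).mul kc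
  have gb : ∀ t x, |θ' (mD η F G t x) * (mK η A B F t x - mK η A B G t x)| ≤
      (L * (C1 + C2)) * |mD η F G t x| := by
    intro t x
    rw [abs_mul]
    calc _ ≤ (L * |mD η F G t x|) * (C1 + C2) :=
          mul_le_mul (hθ.lin1 _) (kb t x) (abs_nonneg _) (by positivity)
      _ = _ := by ring
  -- step 1
  have s1 : ∀ x, θ (mD η F G t2 x) - θ (mD η F G t1 x) = ∫ s in t1..t2,
      θ' (mD η F G s x) * (mK η A B F s x - mK η A B G s x) := by
    intro x
    have e : Continuous (fun s : ℝ => (s, x)) := continuous_id.prodMk continuous_const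
    symm
    apply intervalIntegral.integral_eq_sub_of_hasDerivAt_of_le h2
      (f := fun s => θ (mD η F G s x))
    · exact (hθ.c0.comp (dc.comp e)).continuousOn
    · intro s hs
      have hs0 : 0 < s := h1.trans_lt hs.1
      have hd : HasDerivAt (fun s => mD η F G s x) (mK η A B F s x - mK η A B G s x) s :=
        (mF_time_deriv hc hF hη s x hs0).sub (mF_time_deriv hc hG hη s x hs0)
      exact (hθ.d1 _).comp s hd
    · exact (gc.comp e).intervalIntegrable _ _
  -- step 2
  have s2 : Integrable (fun q : ℝ × ℝ => θ' (mD η F G q.1 q.2) *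
      (mK η A B F q.1 q.2 - mK η A B G q.1 q.2)) ((volume.restrict (Ioc t1 t2)).prod volume) := by
    refine Integrable.mono' ((mD_int2 hF hG hη t1 t2 h1).abs.const_mul (L * (C1 + C2)))
      gc.aestronglyMeasurable (Eventually.of_forall fun q => gb q.1 q.2)
  rw [← integral_sub (theta_int hθ hF hG hη t2) (theta_int hθ hF hG hη t1)]
  simp_rw [s1, intervalIntegral.integral_of_le h2]
  rw [← integral_integral_swap s2]
  congr 1; ext s
  -- step 3
  have gi : Integrable (fun x => θ' (mD η F G s x) * (mK η A B F s x - mK η A B G s x)) := by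
    refine Integrable.mono' ((mD_int1 hF hG hη s).abs.const_mul (L * (C1 + C2)))
      (cont_snd gc s).aestronglyMeasurable (Eventually.of_forall fun q => gb s q)
  obtain ⟨C3, h30, hj1⟩ := mJ_bdd hc hF hη
  obtain ⟨C4, h40, hj2⟩ := mJ_bdd hc hG hη
  have hxi := Xi_int hc hθ hF hG hη s
  have key := integral_mul_deriv_eq_deriv_mul_of_integrable
    (u := fun x => θ' (mD η F G s x)) (v := fun x => mJ η A B F s x - mJ η A B G s x)
    (u' := fun x => θ'' (mD η F G s x) * (mp η F s x - mp η G s x))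
    (v' := fun x => mK η A B F s x - mK η A B G s x)
    (fun x _ => (hθ.d2 _).comp x (mD_deriv hF hG hη s x))
    (fun x _ => (mJ_deriv hc hF hη s x).sub (mJ_deriv hc hG hη s x))
    gi (by
      refine hxi.neg.congr (Eventually.of_forall fun x => ?_)
      simp [Xi]) (by
      refine Integrable.mono' ((mD_int1 hF hG hη s).abs.const_mul (L * (C3 + C4))) ?_ ?_
      · exact ((hθ.c1.comp (cont_snd dc s)).mul (cont_snd
          ((mJ_cont hc hF hη).sub (mJ_cont hc hG hη)) s)).aestronglyMeasurable
      · refine Eventually.of_forall fun x => ?_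
        simp only [Pi.mul_apply]
        rw [norm_mul, Real.norm_eq_abs, Real.norm_eq_abs]
        calc _ ≤ (L * |mD η F G s x|) * (C3 + C4) :=
              mul_le_mul (hθ.lin1 _) ((abs_sub _ _).trans (add_le_add (hj1 s x) (hj2 s x)))
                (abs_nonneg _) (by positivity)
          _ = _ := by ring)
  rw [key, ← integral_neg]
  rfl

end WF

namespace WF
variable {a A B : ℝ → ℝ} {Ca Cb : ℝ} {F G : ℝ → ℝ → ℝ} {η : ℝ → ℝ} {δ : ℝ}
variable {θ θ' θ'' : ℝ → ℝ} {L : ℝ}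

/-- spatial shift -/
def sh (G : ℝ → ℝ → ℝ) (r : ℝ) : ℝ → ℝ → ℝ := fun t x => G t (x + r)

theorem Sol.sh (hG : Sol A B G) (r : ℝ) : Sol A B (WF.sh G r) := hG.shift r

theorem mF_sh (r t x : ℝ) : mF η (sh F r) t x = mF η F t (x + r) := mF_shift r t x
theorem mp_sh (r t x : ℝ) : mp η (sh F r) t x = mp η F t (x + r) := mp_shift r t x
theorem mw_sh (r t x : ℝ) : mw η A (sh F r) t x = mw η A F t (x + r) := mw_shift r t x
theorem mB_sh (r t x : ℝ) : mB η B (sh F r) t x = mB η B F t (x + r) := mB_shift r t x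
theorem mJ_sh (r t x : ℝ) : mJ η A B (sh F r) t x = mJ η A B F t (x + r) := mJ_shift r t x

theorem XiR_cont (hc : Coef a A B Ca Cb) (hθ : Th θ θ' θ'' L) (hF : Sol A B F) (hG : Sol A B G)
    (hη : Moll η δ) :
    Continuous (fun q : (ℝ × ℝ) × ℝ => Xi θ'' η A B F (sh G q.1.1) q.1.2 q.2) := by
  unfold Xi mD
  simp_rw [mF_sh, mp_sh, mJ_sh]
  have e1 : Continuous (fun q : (ℝ × ℝ) × ℝ => (q.1.2, q.2)) := by fun_prop
  have e2 : Continuous (fun q : (ℝ × ℝ) × ℝ => (q.1.2, q.2 + q.1.1)) := by fun_prop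
  exact (((hθ.cont.comp (((mF_cont hF hη).comp e1).sub ((mF_cont hG hη).comp e2))).mul
    (((mp_cont hF hη).comp e1).sub ((mp_cont hG hη).comp e2))).mul
    (((mJ_cont hc hF hη).comp e1).sub ((mJ_cont hc hG hη).comp e2))).neg

theorem XiR_abs (hc : Coef a A B Ca Cb) (hθ : Th θ θ' θ'' L) (hF : Sol A B F) (hG : Sol A B G)
    (hη : Moll η δ) : ∃ C, 0 ≤ C ∧ ∀ r t x, |Xi θ'' η A B F (sh G r) t x| ≤
      C * (mp η F t x + mp η G t (x + r)) := by
  obtain ⟨C1, h10, h1⟩ := mJ_bdd hc hF hη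
  obtain ⟨C2, h20, h2⟩ := mJ_bdd hc hG hη
  have hL := hθ.L0
  refine ⟨L * (C1 + C2), by positivity, fun r t x => ?_⟩
  have p0 := mp_nonneg hF hη t x
  have q0 := mp_nonneg hG hη t (x + r)
  unfold Xi
  rw [abs_neg, abs_mul, abs_mul, mp_sh, mJ_sh]
  have e1 : |θ'' (mD η F (sh G r) t x)| ≤ L := by rw [abs_of_nonneg (hθ.nn _)]; exact hθ.bd _
  have e2 : |mp η F t x - mp η G t (x + r)| ≤ mp η F t x + mp η G t (x + r) := by
    rw [abs_le]; constructor <;> linarith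
  have e3 : |mJ η A B F t x - mJ η A B G t (x + r)| ≤ C1 + C2 :=
    (abs_sub _ _).trans (add_le_add (h1 t x) (h2 t (x + r)))
  calc _ ≤ (L * (mp η F t x + mp η G t (x + r))) * (C1 + C2) := by gcongr
    _ = _ := by ring

/-- dissipation rate -/
def VR (θ'' : ℝ → ℝ) (η : ℝ → ℝ) (A B : ℝ → ℝ) (F G : ℝ → ℝ → ℝ) (r s : ℝ) : ℝ :=
  ∫ x, Xi θ'' η A B F (sh G r) s x

theorem VR_meas (hc : Coef a A B Ca Cb) (hθ : Th θ θ' θ'' L) (hF : Sol A B F) (hG : Sol A B G)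
    (hη : Moll η δ) : StronglyMeasurable (fun q : ℝ × ℝ => VR θ'' η A B F G q.1 q.2) :=
  (XiR_cont hc hθ hF hG hη).stronglyMeasurable.integral_prod_right'

theorem VR_bdd (hc : Coef a A B Ca Cb) (hθ : Th θ θ' θ'' L) (hF : Sol A B F) (hG : Sol A B G)
    (hη : Moll η δ) : ∃ C, 0 ≤ C ∧ ∀ r s, |VR θ'' η A B F G r s| ≤ C := by
  obtain ⟨C, hC, h⟩ := XiR_abs hc hθ hF hG hη
  refine ⟨C * 2, by positivity, fun r s => ?_⟩
  have h1 := (mp_int hF hη s)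
  have h2 := (mp_int hG hη s).1.comp_add_right r
  have h3 : ∫ x, C * (mp η F s x + mp η G s (x + r)) = C * 2 := by
    rw [integral_const_mul, integral_add h1.1 h2, h1.2, integral_add_right_eq_self (mp η G s) r,
      (mp_int hG hη s).2]
    norm_num
  rw [← h3]
  have h4 : Integrable (fun x => C * (mp η F s x + mp η G s (x + r))) := (h1.1.add h2).const_mul C
  exact norm_integral_le_of_norm_le (f := fun x => Xi θ'' η A B F (sh G r) s x) h4 (Eventually.of_forall fun x => h r s x)

/-- averaged identity -/
theorem GIavg (hc : Coef a A B Ca Cb) (hθ : Th θ θ' θ'' L) (hF : Sol A B F) (hG : Sol A B G)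
    (hη : Moll η δ) (t1 t2 : ℝ) (h1 : 0 ≤ t1) (h2 : t1 ≤ t2) (r0 r1 : ℝ) :
    ∫ r in Ioc r0 r1, ((∫ x, θ (mD η F (sh G r) t2 x)) - ∫ x, θ (mD η F (sh G r) t1 x)) =
      ∫ s in Ioc t1 t2, ∫ r in Ioc r0 r1, VR θ'' η A B F G r s := by
  obtain ⟨C, hC, h⟩ := VR_bdd hc hθ hF hG hη
  have hi : Integrable (fun q : ℝ × ℝ => VR θ'' η A B F G q.1 q.2)
      ((volume.restrict (Ioc r0 r1)).prod (volume.restrict (Ioc t1 t2))) := by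
    refine Integrable.mono' (integrable_const C) (VR_meas hc hθ hF hG hη).aestronglyMeasurable
      (Eventually.of_forall fun q => h q.1 q.2)
  rw [← integral_integral_swap hi]
  congr 1; ext r
  rw [GI hc hθ hF (hG.sh r) hη t1 t2 h1 h2, intervalIntegral.integral_of_le h2]
  rfl

theorem VRs_int (hc : Coef a A B Ca Cb) (hθ : Th θ θ' θ'' L) (hF : Sol A B F) (hG : Sol A B G)
    (hη : Moll η δ) (t1 t2 : ℝ) (r0 r1 : ℝ) :
    IntegrableOn (fun s => ∫ r in Ioc r0 r1, VR θ'' η A B F G r s) (Ioc t1 t2) := by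
  obtain ⟨C, hC, h⟩ := VR_bdd hc hθ hF hG hη
  have hi : Integrable (fun q : ℝ × ℝ => VR θ'' η A B F G q.1 q.2)
      ((volume.restrict (Ioc r0 r1)).prod (volume.restrict (Ioc t1 t2))) := by
    refine Integrable.mono' (integrable_const C) (VR_meas hc hθ hF hG hη).aestronglyMeasurable
      (Eventually.of_forall fun q => h q.1 q.2)
  exact hi.integral_prod_right

section avg

theorem p_prod (hF : Sol A B F) (hη : Moll η δ) (s r0 r1 : ℝ) (hr : r0 ≤ r1) :
    Integrable (fun q : ℝ × ℝ => mp η F s q.2) ((volume.restrict (Ioc r0 r1)).prod volume) ∧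
    ∫ q : ℝ × ℝ, mp η F s q.2 ∂((volume.restrict (Ioc r0 r1)).prod volume) = r1 - r0 := by
  have hi : Integrable (fun q : ℝ × ℝ => mp η F s q.2)
    ((volume.restrict (Ioc r0 r1)).prod volume) := (mp_int hF hη s).1.comp_snd _
  refine ⟨hi, ?_⟩
  rw [integral_prod _ hi]
  simp [(mp_int hF hη s).2, hr]

theorem q_prod (hF : Sol A B F) (hη : Moll η δ) (s r0 r1 : ℝ) (hr : r0 ≤ r1) :
    Integrable (fun q : ℝ × ℝ => mp η F s (q.2 + q.1))
      ((volume.restrict (Ioc r0 r1)).prod volume) ∧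
    ∫ q : ℝ × ℝ, mp η F s (q.2 + q.1) ∂((volume.restrict (Ioc r0 r1)).prod volume) = r1 - r0 := by
  have e : ∀ r, ∫ x, mp η F s (x + r) = 1 := by
    intro r
    rw [integral_add_right_eq_self (mp η F s) r, (mp_int hF hη s).2]
  have hi : Integrable (fun q : ℝ × ℝ => mp η F s (q.2 + q.1))
    ((volume.restrict (Ioc r0 r1)).prod volume) := by
    rw [integrable_prod_iff]
    · refine ⟨Eventually.of_forall fun r => (mp_int hF hη s).1.comp_add_right r, ?_⟩
      have : ∀ z, ‖mp η F s z‖ = mp η F s z := fun z => Real.norm_of_nonneg (mp_nonneg hF hη s z)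
      simp only [this, e]
      exact integrable_const _
    · have : Continuous (fun q : ℝ × ℝ => (s, q.2 + q.1)) := by fun_prop
      exact ((mp_cont hF hη).comp this).aestronglyMeasurable
  refine ⟨hi, ?_⟩
  rw [integral_prod _ hi]
  simp [e, hr]

/-- the telescoping bound -/
theorem pq_prod (hF : Sol A B F) (hG : Sol A B G) (hη : Moll η δ) (s r0 r1 : ℝ) (hr : r0 ≤ r1)
    {Θ ϑ : ℝ → ℝ} (hΘ : ∀ u, HasDerivAt Θ (ϑ u) u) (hcont : Continuous ϑ) {L M : ℝ}
    (hL : ∀ u, |ϑ u| ≤ L)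
    (hM : ∀ u v, |u| ≤ 1 → |v| ≤ 1 → Θ u - Θ v ≤ M) :
    Integrable (fun q : ℝ × ℝ => ϑ (mF η F s q.2 - mF η G s (q.2 + q.1)) * mp η F s q.2 *
      mp η G s (q.2 + q.1)) ((volume.restrict (Ioc r0 r1)).prod volume) ∧
    ∫ q : ℝ × ℝ, ϑ (mF η F s q.2 - mF η G s (q.2 + q.1)) * mp η F s q.2 *
      mp η G s (q.2 + q.1) ∂((volume.restrict (Ioc r0 r1)).prod volume) ≤ M := by
  obtain ⟨C, hC, hCb⟩ := mp_bdd hG hη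
  have e1 : Continuous (fun q : ℝ × ℝ => (s, q.2)) := by fun_prop
  have e2 : Continuous (fun q : ℝ × ℝ => (s, q.2 + q.1)) := by fun_prop
  have c : Continuous (fun q : ℝ × ℝ => ϑ (mF η F s q.2 - mF η G s (q.2 + q.1)) * mp η F s q.2 *
      mp η G s (q.2 + q.1)) :=
    ((hcont.comp (((mF_cont hF hη).comp e1).sub ((mF_cont hG hη).comp e2))).mul
      ((mp_cont hF hη).comp e1)).mul ((mp_cont hG hη).comp e2)
  have hL0 : 0 ≤ L := (abs_nonneg _).trans (hL 0)
  have hi : Integrable (fun q : ℝ × ℝ => ϑ (mF η F s q.2 - mF η G s (q.2 + q.1)) * mp η F s q.2 *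
      mp η G s (q.2 + q.1)) ((volume.restrict (Ioc r0 r1)).prod volume) := by
    refine Integrable.mono' ((p_prod hF hη s r0 r1 hr).1.const_mul (L * C)) c.aestronglyMeasurable
      (Eventually.of_forall fun q => ?_)
    rw [norm_mul, norm_mul, Real.norm_of_nonneg (mp_nonneg hF hη s q.2)]
    calc _ ≤ L * mp η F s q.2 * C := by
          have := mp_nonneg hF hη s q.2
          gcongr
          · exact hL _
          · exact hCb _ _
      _ = _ := by ring
  refine ⟨hi, ?_⟩
  rw [integral_prod_symm _ hi]
  have hM0 : 0 ≤ M := by have := hM 0 0 (by simp) (by simp); simpa using this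
  have : M = ∫ x, mp η F s x * M := by rw [integral_mul_const, (mp_int hF hη s).2, one_mul]
  rw [this]
  apply integral_mono hi.integral_prod_right ((mp_int hF hη s).1.mul_const M)
  intro x
  simp only
  have ftc : ∫ r in r0..r1, ϑ (mF η F s x - mF η G s (x + r)) * mp η G s (x + r) =
      Θ (mF η F s x - mF η G s (x + r0)) - Θ (mF η F s x - mF η G s (x + r1)) := by
    have := intervalIntegral.integral_eq_sub_of_hasDerivAt (a := r0) (b := r1)
      (f := fun r => - Θ (mF η F s x - mF η G s (x + r)))
      (f' := fun r => ϑ (mF η F s x - mF η G s (x + r)) * mp η G s (x + r)) (fun r _ => ?_) ?_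
    · rw [this]; ring
    · have h1 : HasDerivAt (fun r => mF η G s (x + r)) (mp η G s (x + r)) r := by
        simpa using (mF_deriv hG hη s (x + r)).comp_const_add x r
      have h2 := ((hΘ _).comp r (h1.const_sub (mF η F s x))).neg
      rw [show ϑ (mF η F s x - mF η G s (x + r)) * mp η G s (x + r) =
        -(ϑ (mF η F s x - mF η G s (x + r)) * -mp η G s (x + r)) by ring]
      exact h2
    · apply Continuous.intervalIntegrable
      have e3 : Continuous (fun r : ℝ => (s, x + r)) := by fun_prop
      exact (hcont.comp (continuous_const.sub ((mF_cont hG hη).comp e3))).mul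
        ((mp_cont hG hη).comp e3)
  have e4 : ∫ r in Ioc r0 r1, ϑ (mF η F s x - mF η G s (x + r)) * mp η F s x * mp η G s (x + r) =
      mp η F s x * ∫ r in r0..r1, ϑ (mF η F s x - mF η G s (x + r)) * mp η G s (x + r) := by
    rw [intervalIntegral.integral_of_le hr, ← integral_const_mul]
    congr 1; ext r; ring
  rw [e4, ftc]
  apply mul_le_mul_of_nonneg_left _ (mp_nonneg hF hη s x)
  have b : ∀ y, |mF η F s x - mF η G s y| ≤ 1 := by
    intro y
    rw [abs_le]
    constructor <;> linarith [mF_nonneg hF hη s x, mF_nonneg hG hη s y, mF_le_one hF hη s x,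
      mF_le_one hG hη s y]
  exact hM _ _ (b _) (b _)

theorem XiR_prod (hc : Coef a A B Ca Cb) (hθ : Th θ θ' θ'' L) (hF : Sol A B F) (hG : Sol A B G)
    (hη : Moll η δ) (s r0 r1 : ℝ) (hr : r0 ≤ r1) :
    Integrable (fun q : ℝ × ℝ => Xi θ'' η A B F (sh G q.1) s q.2)
      ((volume.restrict (Ioc r0 r1)).prod volume) ∧
    ∫ q : ℝ × ℝ, Xi θ'' η A B F (sh G q.1) s q.2 ∂((volume.restrict (Ioc r0 r1)).prod volume)
      = ∫ r in Ioc r0 r1, VR θ'' η A B F G r s := by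
  obtain ⟨C, hC, h⟩ := XiR_abs hc hθ hF hG hη
  have e1 : Continuous (fun q : ℝ × ℝ => ((q.1, s), q.2)) := by fun_prop
  have hi : Integrable (fun q : ℝ × ℝ => Xi θ'' η A B F (sh G q.1) s q.2)
      ((volume.restrict (Ioc r0 r1)).prod volume) := by
    refine Integrable.mono' (((p_prod hF hη s r0 r1 hr).1.add
      (q_prod hG hη s r0 r1 hr).1).const_mul C)
      ((XiR_cont hc hθ hF hG hη).comp e1).aestronglyMeasurable
      (Eventually.of_forall fun q => h q.1 s q.2)
  exact ⟨hi, integral_prod _ hi⟩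

/-- main averaging bound -/
theorem VR_avg_le' (hc : Coef a A B Ca Cb) (hθ : Th θ θ' θ'' L) (hF : Sol A B F) (hG : Sol A B G)
    (hη : Moll η δ) (s r0 r1 : ℝ) (hr : r0 ≤ r1) {M e1 e2 e3 : ℝ} {E : ℝ → ℝ}
    (he1 : 0 ≤ e1) (he2 : 0 ≤ e2) (hE : Integrable E)
    (hM : ∀ u v, |u| ≤ 1 → |v| ≤ 1 → θ' u - θ' v ≤ M)
    (hle : ∀ r x, Xi θ'' η A B F (sh G r) s x ≤
      e1 * (θ'' (mF η F s x - mF η G s (x + r)) * mp η F s x * mp η G s (x + r)) +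
      e2 * (1 * mp η F s x * mp η G s (x + r)) + e3 * (mp η F s x + mp η G s (x + r)) - E x) :
    ∫ r in Ioc r0 r1, VR θ'' η A B F G r s ≤
      e1 * M + e2 * 2 + e3 * (2 * (r1 - r0)) - (r1 - r0) * ∫ x, E x := by
  obtain ⟨i1, b1⟩ := pq_prod hF hG hη s r0 r1 hr hθ.d2 hθ.cont
    (fun u => by rw [abs_of_nonneg (hθ.nn u)]; exact hθ.bd u) hM
  obtain ⟨i2, b2⟩ := pq_prod hF hG hη s r0 r1 hr (Θ := fun u => u) (ϑ := fun _ => 1) (L := 1)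
    (M := 2) (fun u => hasDerivAt_id u) continuous_const (by simp)
    (fun u v hu hv => by linarith [(abs_le.1 hu).2, (abs_le.1 hv).1])
  obtain ⟨i3, b3⟩ := p_prod hF hη s r0 r1 hr
  obtain ⟨i4, b4⟩ := q_prod hG hη s r0 r1 hr
  obtain ⟨i5, b5⟩ := XiR_prod hc hθ hF hG hη s r0 r1 hr
  have iE : Integrable (fun q : ℝ × ℝ => E q.2) ((volume.restrict (Ioc r0 r1)).prod volume) :=
    hE.comp_snd _
  have bE : ∫ q : ℝ × ℝ, E q.2 ∂((volume.restrict (Ioc r0 r1)).prod volume) =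
      (r1 - r0) * ∫ x, E x := by
    rw [integral_prod _ iE]
    simp [hr]
  rw [← b5]
  have i34 := i3.add i4
  have j1 := i1.const_mul e1
  have j2 := i2.const_mul e2
  have j3 := i34.const_mul e3
  refine (integral_mono i5 (((j1.add j2).add j3).sub iE) (fun q => hle q.1 q.2)).trans ?_
  rw [integral_sub' ((j1.add j2).add j3) iE,
    integral_add' (j1.add j2) j3, integral_add' j1 j2, integral_const_mul, integral_const_mul,
    integral_const_mul, integral_add' i3 i4, b3, b4, bE]
  have := mul_le_mul_of_nonneg_left b1 he1
  have := mul_le_mul_of_nonneg_left b2 he2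
  have e : e3 * (r1 - r0 + (r1 - r0)) = e3 * (2 * (r1 - r0)) := by ring
  linarith

theorem VR_avg_le (hc : Coef a A B Ca Cb) (hθ : Th θ θ' θ'' L) (hF : Sol A B F) (hG : Sol A B G)
    (hη : Moll η δ) (s r0 r1 : ℝ) (hr : r0 ≤ r1) {M e1 e2 e3 : ℝ}
    (he1 : 0 ≤ e1) (he2 : 0 ≤ e2)
    (hM : ∀ u v, |u| ≤ 1 → |v| ≤ 1 → θ' u - θ' v ≤ M)
    (hle : ∀ r x, Xi θ'' η A B F (sh G r) s x ≤
      e1 * (θ'' (mF η F s x - mF η G s (x + r)) * mp η F s x * mp η G s (x + r)) +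
      e2 * (1 * mp η F s x * mp η G s (x + r)) + e3 * (mp η F s x + mp η G s (x + r))) :
    ∫ r in Ioc r0 r1, VR θ'' η A B F G r s ≤ e1 * M + e2 * 2 + e3 * (2 * (r1 - r0)) := by
  have := VR_avg_le' hc hθ hF hG hη s r0 r1 hr (E := fun _ => 0) he1 he2 (integrable_zero _ _ _) hM
    (fun r x => by rw [sub_zero]; exact hle r x)
  simpa using this

end avg

end WF

namespace WF
variable {a A B : ℝ → ℝ} {Ca Cb : ℝ} {F G : ℝ → ℝ → ℝ} {η : ℝ → ℝ} {δ : ℝ}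
variable {θ θ' θ'' : ℝ → ℝ} {L : ℝ}

theorem Th_sq : Th (fun u => u ^ 2) (fun u => 2 * u) (fun _ => 2) 2 where
  d1 u := by simpa using hasDerivAt_pow 2 u
  d2 u := by simpa using (hasDerivAt_id u).const_mul 2
  cont := continuous_const
  z0 := by norm_num
  z1 := by norm_num
  nn u := by norm_num
  bd u := le_rfl

theorem pw_int (hc : Coef a A B Ca Cb) (hF : Sol A B F) (hη : Moll η δ) :
    (∀ s, Integrable (fun x => mp η F s x * mw η A F s x)) ∧
    ∃ C, ∀ s, ‖∫ x, mp η F s x * mw η A F s x‖ ≤ C := by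
  obtain ⟨C, hC, hb⟩ := mp_bdd hF hη
  have hle : ∀ s x, ‖mp η F s x * mw η A F s x‖ ≤ (C * Ca) * mp η F s x := by
    intro s x
    have h1 := mp_nonneg hF hη s x
    have h2 := mw_nonneg hc hF hη s x
    have h3 := mw_le hc hF hη s x
    have h4 := (abs_le.1 (hb s x)).2
    rw [Real.norm_of_nonneg (by positivity)]
    calc _ ≤ C * (Ca * mp η F s x) := mul_le_mul h4 h3 h2 hC
      _ = _ := by ring
  refine ⟨fun s => ?_, C * Ca, fun s => ?_⟩
  · refine Integrable.mono' ((mp_int hF hη s).1.const_mul (C * Ca)) ?_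
      (Eventually.of_forall fun x => hle s x)
    exact (cont_snd ((mp_cont hF hη).mul (mw_cont hc hF hη)) s).aestronglyMeasurable
  · have e : C * Ca = ∫ x, (C * Ca) * mp η F s x := by
      rw [integral_const_mul, (mp_int hF hη s).2, mul_one]
    rw [e]
    exact norm_integral_le_of_norm_le ((mp_int hF hη s).1.const_mul (C * Ca))
      (Eventually.of_forall fun x => hle s x)

theorem pw_meas (hc : Coef a A B Ca Cb) (hF : Sol A B F) (hη : Moll η δ) :
    StronglyMeasurable (fun s => ∫ x, mp η F s x * mw η A F s x) :=
  ((mp_cont hF hη).mul (mw_cont hc hF hη)).stronglyMeasurable.integral_prod_right'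
    (f := fun q : ℝ × ℝ => mp η F q.1 q.2 * mw η A F q.1 q.2)

theorem I0_le (hF : Sol A B F) (hη : Moll η δ) (t r : ℝ) (hr : 0 ≤ r) :
    ∫ x, (fun u : ℝ => u ^ 2) (mD η F (sh F r) t x) ≤ r + 2 * δ := by
  obtain ⟨hi, he⟩ := hF.int_shift t (r + 2 * δ)
  have hi' := hi.comp_sub_right δ
  rw [← he, ← integral_sub_right_eq_self (fun x => F t (x + (r + 2 * δ)) - F t x) δ]
  apply integral_mono (theta_int Th_sq hF (hF.sh r) hη t) hi'
  intro x
  simp only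
  have h1 := mF_le hF hη t (x + r)
  have h2 := le_mF hF hη t x
  have h3 : mF η F t x ≤ mF η F t (x + r) := hη.mol_mono (hF.mono t) (hF.abs t) (by linarith)
  have h4 := abs_le.1 (mD_abs hF (hF.sh r) hη t x)
  have h5 : mD η F (sh F r) t x = mF η F t x - mF η F t (x + r) := by unfold mD; rw [mF_sh]
  rw [h5] at h4 ⊢
  rw [show x - δ + (r + 2 * δ) = x + r + δ by ring]
  nlinarith

theorem energy (hc : Coef a A B Ca Cb) (hF : Sol A B F) (hη : Moll η δ) (hδ : δ ≤ 1)
    (t1 t2 : ℝ) (h1 : 0 ≤ t1) (h2 : t1 ≤ t2) :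
    ∫ s in Ioc t1 t2, ∫ x, mp η F s x * mw η A F s x ≤ 3 + (4 * Ca + 8 * Cb) * (t2 - t1) := by
  have gi := GIavg hc Th_sq hF hF hη t1 t2 h1 h2 0 1
  have lo : -3 ≤ ∫ r in Ioc (0:ℝ) 1, ((∫ x, (fun u : ℝ => u ^ 2) (mD η F (sh F r) t2 x)) -
      ∫ x, (fun u : ℝ => u ^ 2) (mD η F (sh F r) t1 x)) := by
    by_cases hi : IntegrableOn (fun r => (∫ x, (fun u : ℝ => u ^ 2) (mD η F (sh F r) t2 x)) -
      ∫ x, (fun u : ℝ => u ^ 2) (mD η F (sh F r) t1 x)) (Ioc 0 1)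
    · have : (-3:ℝ) = ∫ r in Ioc (0:ℝ) 1, (-3:ℝ) := by simp
      rw [this]
      apply setIntegral_mono_on (integrable_const _) hi measurableSet_Ioc
      intro r hr
      have e1 := I0_le hF hη t1 r hr.1.le
      have e2 : 0 ≤ ∫ x, (fun u : ℝ => u ^ 2) (mD η F (sh F r) t2 x) :=
        integral_nonneg fun x => sq_nonneg _
      have := hr.2
      linarith
    · rw [integral_undef hi]; norm_num
  obtain ⟨pi, C, pb⟩ := pw_int hc hF hη
  have pio : IntegrableOn (fun s => ∫ x, mp η F s x * mw η A F s x) (Ioc t1 t2) :=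
    Integrable.mono' (integrable_const C) (pw_meas hc hF hη).aestronglyMeasurable
      (Eventually.of_forall fun s => pb s)
  have up : ∫ s in Ioc t1 t2, ∫ r in Ioc (0:ℝ) 1, VR (fun _ => 2) η A B F F r s ≤
      ∫ s in Ioc t1 t2, ((4 * Ca + 8 * Cb) - ∫ x, mp η F s x * mw η A F s x) := by
    apply integral_mono (VRs_int hc Th_sq hF hF hη t1 t2 0 1)
      ((integrable_const _).sub pio)
    intro s
    have := VR_avg_le' hc Th_sq hF hF hη s 0 1 zero_le_one (M := 4) (e1 := 0) (e2 := 2 * Ca)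
      (e3 := 4 * Cb) (E := fun x => mp η F s x * mw η A F s x) le_rfl
      (by have := hc.Ca0; positivity) (pi s)
      (fun u v hu hv => by linarith [(abs_le.1 hu).2, (abs_le.1 hv).1])
      (fun r x => by
        have hp := mp_nonneg hF hη s x
        have hq := mp_nonneg hF hη s (x + r)
        have hw := mw_nonneg hc hF hη s x
        have hz := mw_nonneg hc hF hη s (x + r)
        have hw1 := mw_le hc hF hη s x
        have hz1 := mw_le hc hF hη s (x + r)
        have hb1 := abs_le.1 (mB_abs hc hF hη s x)
        have hb2 := abs_le.1 (mB_abs hc hF hη s (x + r))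
        unfold Xi mJ
        rw [mp_sh, mw_sh, mB_sh]
        generalize mp η F s x = p at *
        generalize mp η F s (x + r) = q at *
        generalize mw η A F s x = w at *
        generalize mw η A F s (x + r) = z at *
        generalize mB η B F s x = b1 at *
        generalize mB η B F s (x + r) = b2 at *
        have k1 : p * z ≤ p * (Ca * q) := mul_le_mul_of_nonneg_left hz1 hp
        have k2 : q * w ≤ q * (Ca * p) := mul_le_mul_of_nonneg_left hw1 hq
        have k3 : 0 ≤ q * z := mul_nonneg hq hz
        have k4 : p * (b1 - b2) ≤ p * (2 * Cb) := mul_le_mul_of_nonneg_left (by linarith) hp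
        have k5 : q * (b2 - b1) ≤ q * (2 * Cb) := mul_le_mul_of_nonneg_left (by linarith) hq
        nlinarith)
    simp only [Pi.sub_apply]
    linarith
  rw [integral_sub (integrable_const _) pio] at up
  simp only [integral_const, MeasurableSet.univ, measureReal_restrict_apply, univ_inter,
    Real.volume_real_Ioc_of_le h2, smul_eq_mul] at up
  rw [gi] at lo
  linarith

theorem ae_cont (hc : Coef a A B Ca Cb) (hF : Sol A B F) (t1 t2 : ℝ) (h1 : 0 ≤ t1) (h2 : t1 ≤ t2) :
    ∀ᵐ s ∂(volume.restrict (Ioc t1 t2)), Continuous (F s) := by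
  choose η hη using fun n : ℕ => exists_moll (1 / ((n:ℝ) + 1)) (by positivity)
  let f : ℕ → ℝ → ℝ := fun n s => ∫ x, mp (η n) F s x * mw (η n) A F s x
  have fm : ∀ n, Measurable (fun s => ENNReal.ofReal (f n s)) := fun n =>
    (pw_meas hc hF (hη n)).measurable.ennreal_ofReal
  have f0 : ∀ n s, 0 ≤ f n s := fun n s => integral_nonneg fun x =>
    mul_nonneg (mp_nonneg hF (hη n) s x) (mw_nonneg hc hF (hη n) s x)
  obtain ⟨K, hK⟩ : ∃ K, K = 3 + (4 * Ca + 8 * Cb) * (t2 - t1) := ⟨_, rfl⟩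
  have fb : ∀ n, ∫⁻ s in Ioc t1 t2, ENNReal.ofReal (f n s) ≤ ENNReal.ofReal K := by
    intro n
    obtain ⟨pi, C, pb⟩ := pw_int hc hF (hη n)
    have pio : IntegrableOn (f n) (Ioc t1 t2) :=
      Integrable.mono' (integrable_const C) (pw_meas hc hF (hη n)).aestronglyMeasurable
        (Eventually.of_forall fun s => pb s)
    rw [← ofReal_integral_eq_lintegral_ofReal pio (Eventually.of_forall fun s => f0 n s)]
    apply ENNReal.ofReal_le_ofReal
    rw [hK]
    refine energy hc hF (hη n) ?_ t1 t2 h1 h2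
    rw [div_le_one (by positivity)]; linarith [Nat.cast_nonneg (α := ℝ) n]
  have fat : ∫⁻ s in Ioc t1 t2, liminf (fun n => ENNReal.ofReal (f n s)) atTop ≤
      ENNReal.ofReal K := by
    refine (lintegral_liminf_le fm).trans ?_
    exact (liminf_le_liminf (Eventually.of_forall fb)).trans (by simp)
  have hlt := ae_lt_top (Measurable.liminf fm) (ne_top_of_le_ne_top ENNReal.ofReal_ne_top fat)
  filter_upwards [hlt] with s hs
  rw [continuous_iff_continuousAt]
  intro x0
  by_contra hcon
  rw [(hF.mono s).continuousAt_iff_leftLim_eq_rightLim] at hcon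
  have mono := hF.mono s
  have hle : leftLim (F s) x0 < rightLim (F s) x0 :=
    lt_of_le_of_ne (mono.leftLim_le_rightLim le_rfl) hcon
  obtain ⟨l, hl⟩ : ∃ l, l = leftLim (F s) x0 := ⟨_, rfl⟩
  obtain ⟨u, hu⟩ : ∃ u, u = rightLim (F s) x0 := ⟨_, rfl⟩
  rw [← hl, ← hu] at hle
  have hlz : ∀ z < x0, F s z ≤ l := fun z hz => hl ▸ mono.le_leftLim hz
  have huz : ∀ z > x0, u ≤ F s z := fun z hz => hu ▸ mono.rightLim_le hz
  have hl0 : 0 ≤ l := (hF.nonneg s (x0 - 1)).trans (hlz _ (by linarith))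
  have hu1 : u ≤ 1 := (huz (x0 + 1) (by linarith)).trans (hF.le_one _ _)
  have hAA : A l < A u := hc.strict ⟨hl0, by linarith⟩ ⟨by linarith, hu1⟩ hle
  have key : ∀ n : ℕ, (u - l) * (A u - A l) * (((n:ℝ) + 1) / 2) ≤ f n s := by
    intro n
    have hm := hη n
    have b1 : ∀ x, (u - l) * η n (x - x0) ≤ mp (η n) F s x := fun x =>
      hm.jump mono (hF.abs s) x0 (u - l) l hlz (fun z hz => by linarith [huz z hz])
        (by linarith) x
    have b2 : ∀ x, (A u - A l) * η n (x - x0) ≤ mw (η n) A F s x := fun x =>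
      hm.jump (h := fun z => A (F s z)) (hc.Amono.comp mono)
        (fun z => hc.Aabs (hF.nonneg s z) (hF.le_one s z)) x0 (A u - A l) (A l)
        (fun z hz => hc.Amono (hlz z hz)) (fun z hz => by linarith [hc.Amono (huz z hz)])
        (by linarith) x
    have b3 := hm.sq_int
    have e : ∫ x, (u - l) * (A u - A l) * η n (x - x0) ^ 2 =
        (u - l) * (A u - A l) * ∫ y, η n y ^ 2 := by
      rw [integral_const_mul, integral_sub_right_eq_self (fun y => η n y ^ 2) x0]
    have hpos : 0 ≤ (u - l) * (A u - A l) := mul_nonneg (by linarith) (by linarith)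
    have e2 : 1 / (2 * (1 / ((n:ℝ) + 1))) = ((n:ℝ) + 1) / 2 := by field_simp
    rw [e2] at b3
    refine (mul_le_mul_of_nonneg_left b3 hpos).trans ?_
    rw [← e]
    apply integral_mono_of_nonneg (Eventually.of_forall fun x => by
      simp only [Pi.zero_apply]; positivity) ((pw_int hc hF hm).1 s)
    refine Eventually.of_forall fun x => ?_
    simp only
    have n1 := hm.nonneg (x - x0)
    calc (u - l) * (A u - A l) * η n (x - x0) ^ 2 =
        ((u - l) * η n (x - x0)) * ((A u - A l) * η n (x - x0)) := by ring
      _ ≤ _ := mul_le_mul (b1 x) (b2 x) (mul_nonneg (by linarith) n1) (mp_nonneg hF hm s x)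
  have tt : Tendsto (fun n => ENNReal.ofReal (f n s)) atTop (𝓝 ⊤) := by
    apply ENNReal.tendsto_ofReal_nhds_top.2
    apply tendsto_atTop_mono key
    apply Tendsto.const_mul_atTop (mul_pos (by linarith) (by linarith))
    apply Tendsto.atTop_div_const (by norm_num)
    exact tendsto_atTop_add_const_right _ _ tendsto_natCast_atTop_atTop
  rw [tt.liminf_eq] at hs
  exact lt_irrefl _ hs

theorem Sol.uc (hF : Sol A B F) (s : ℝ) (hcont : Continuous (F s)) : UniformContinuous (F s) := by
  have hk : LipschitzWith 1 (fun x : ℝ => max 0 (min x 1)) :=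
    (LipschitzWith.id.min_const 1).const_max 0
  have h1 : UniformContinuous (fun x => F s x - max 0 (min x 1)) := by
    apply (hcont.sub hk.continuous).uniformContinuous_of_tendsto_cocompact (x := 0)
    rw [cocompact_eq_atBot_atTop, tendsto_sup]
    constructor
    · apply (hF.bot s).congr'
      filter_upwards [eventually_le_atBot (0:ℝ)] with x hx
      simp only [Pi.sub_apply]
      rw [min_eq_left (by linarith), max_eq_left hx, sub_zero]
    · have := (hF.top s).sub_const 1
      rw [sub_self] at this
      apply this.congr'
      filter_upwards [eventually_ge_atTop (1:ℝ)] with x hx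
      simp only [Pi.sub_apply]
      rw [min_eq_right hx, max_eq_right zero_le_one]
  have := h1.add hk.uniformContinuous
  simpa using this

end WF

namespace WF

theorem hasDerivAt_posSq (s : ℝ) : HasDerivAt (fun s : ℝ => (max s 0) ^ 2) (2 * max s 0) s := by
  rcases lt_trichotomy s 0 with h | h | h
  · rw [max_eq_right h.le, mul_zero]
    refine (hasDerivAt_const s (0:ℝ)).congr_of_eventuallyEq ?_
    filter_upwards [Iio_mem_nhds h] with y hy
    rw [max_eq_right (le_of_lt hy)]; norm_num
  · subst h
    rw [hasDerivAt_iff_isLittleO_nhds_zero]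
    have h1 : (fun h : ℝ => h ^ 2) =o[𝓝 0] (fun h : ℝ => h) := by
      simpa using Asymptotics.isLittleO_pow_pow (𝕜 := ℝ) (show 1 < 2 by norm_num)
    refine Asymptotics.IsBigO.trans_isLittleO (Asymptotics.IsBigO.of_bound 1 ?_) h1
    filter_upwards with h
    simp only [zero_add, max_self, mul_zero, smul_zero, one_mul, ne_eq, OfNat.ofNat_ne_zero,
      not_false_eq_true, zero_pow, sub_zero, norm_pow, Real.norm_eq_abs]
    refine pow_le_pow_left₀ (abs_nonneg _) ?_ 2
    rcases le_total h 0 with h0 | h0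
    · rw [max_eq_right h0]; simp
    · rw [max_eq_left h0]
  · rw [max_eq_left h.le]
    refine (by simpa using hasDerivAt_pow 2 s : HasDerivAt (fun s : ℝ => s ^ 2) (2 * s) s).congr_of_eventuallyEq ?_
    filter_upwards [Ioi_mem_nhds h] with y hy
    rw [max_eq_left (le_of_lt hy)]

theorem exists_th (c : ℝ) (hc : 0 < c) : ∃ θ θ' θ'' : ℝ → ℝ, ∃ L : ℝ, Th θ θ' θ'' L ∧
    (∀ u, |u| * θ'' u ≤ c) ∧ (∀ u v, |u| ≤ 1 → |v| ≤ 1 → θ' u - θ' v ≤ 1) ∧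
    (∀ u, |u| ≤ 1 → |θ u - max u 0| ≤ c) ∧ (∀ u v, |u| ≤ 1 → |v| ≤ 1 → |θ u - θ v| ≤ |u - v|) ∧
    Monotone θ := by
  set l : ℝ := 2 / c with hl
  have hl0 : 0 < l := by positivity
  set N : ℝ := Real.exp l - 1 with hN
  have hN0 : 0 < N := by have := Real.add_one_lt_exp hl0.ne'; simp only [hN]; linarith
  have hlog : Real.log (1 + N) = l := by simp [hN]
  set S : ℝ → ℝ := fun s => Real.log (1 + N * (max s 0) ^ 2) / l with hS
  set T : ℝ → ℝ := fun s => (N * (2 * max s 0)) / (1 + N * (max s 0) ^ 2) / l with hT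
  have hpos : ∀ s : ℝ, 0 < 1 + N * (max s 0) ^ 2 := fun s => by positivity
  have dS : ∀ s, HasDerivAt S (T s) s := fun s =>
    ((((hasDerivAt_posSq s).const_mul N).const_add 1).log (hpos s).ne').div_const l
  have cS : Continuous S := continuous_iff_continuousAt.2 fun s => (dS s).continuousAt
  have S0 : ∀ s, 0 ≤ S s := fun s => by
    refine div_nonneg (Real.log_nonneg ?_) hl0.le
    have : 0 ≤ N * (max s 0) ^ 2 := by positivity
    linarith
  have S1 : ∀ s, s ≤ 1 → S s ≤ 1 := fun s hs => by
    rw [hS]; simp only; rw [div_le_one hl0, ← hlog]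
    refine Real.log_le_log (hpos s) ?_
    have h1 : (max s 0) ^ 2 ≤ 1 := by
      rw [sq_le_one_iff₀ (le_max_right _ _)]; exact max_le hs zero_le_one
    nlinarith
  set θ : ℝ → ℝ := fun s => ∫ v in (0:ℝ)..s, S v with hθ
  have dθ : ∀ s, HasDerivAt θ (S s) s := fun s =>
    intervalIntegral.integral_hasDerivAt_right (cS.intervalIntegrable _ _)
      (cS.stronglyMeasurableAtFilter _ _) cS.continuousAt
  have hmono : Monotone θ := monotone_of_hasDerivAt_nonneg dθ S0
  have hneg : ∀ s, s ≤ 0 → θ s = 0 := fun s hs => by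
    simp only [hθ]
    rw [intervalIntegral.integral_congr (g := fun _ => 0)]; · simp
    intro v hv
    rw [uIcc_of_ge hs] at hv
    simp [hS, max_eq_right hv.2]
  have hlip : ∀ u v, v ≤ u → u ≤ 1 → θ u - θ v ≤ u - v := fun u v huv hu => by
    have h1 : θ u - θ v = ∫ w in v..u, S w := by
      simp only [hθ]
      exact intervalIntegral.integral_interval_sub_left (cS.intervalIntegrable _ _)
        (cS.intervalIntegrable _ _)
    rw [h1]
    calc ∫ w in v..u, S w ≤ ∫ w in v..u, (1:ℝ) :=
          intervalIntegral.integral_mono_on huv (cS.intervalIntegrable _ _) (by simp)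
            fun w hw => S1 w (hw.2.trans hu)
      _ = u - v := by simp
  have hθ0 : θ 0 = 0 := hneg 0 le_rfl
  refine ⟨θ, S, T, N * 2 * (1 + 1 / N) / l, ⟨dθ, dS, ?_, hθ0, by simp [hS], ?_, ?_⟩, ?_, ?_, ?_, ?_, hmono⟩
  · simp only [hT]
    refine Continuous.div_const (Continuous.div (by fun_prop) (by fun_prop) fun s => (hpos s).ne') _
  · intro u
    have := hpos u
    have : 0 ≤ max u 0 := le_max_right _ _
    simp only [hT]; positivity
  · intro u
    simp only [hT]
    refine div_le_div_of_nonneg_right ?_ hl0.le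
    rw [div_le_iff₀ (hpos u)]
    generalize max u 0 = m
    have e : N * 2 * (1 + 1 / N) * (1 + N * m ^ 2) = 2 * (N + 1) * (1 + N * m ^ 2) := by
      field_simp
    rw [e]
    nlinarith [sq_nonneg (m - 1), sq_nonneg (N * m), mul_nonneg hN0.le (sq_nonneg (m-1)), sq_nonneg m]
  · intro u
    have hle : |u| * T u ≤ max u 0 * T u := by
      rcases le_total u 0 with h | h
      · simp [hT, max_eq_right h]
      · rw [max_eq_left h, abs_of_nonneg h]
    refine hle.trans ?_
    have e : max u 0 * T u = (2 * (N * (max u 0) ^ 2) / (1 + N * (max u 0) ^ 2)) / l := by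
      simp only [hT]; ring
    have e2 : c = 2 / l := by simp only [hl]; field_simp
    rw [e, e2]
    refine div_le_div_of_nonneg_right ?_ hl0.le
    rw [div_le_iff₀ (hpos u)]
    linarith
  · intro u v hu _
    have := S1 u (le_of_abs_le hu); have := S0 v; linarith
  · intro u hu
    have hu1 := le_of_abs_le hu
    rcases le_or_gt u 0 with h | h
    · rw [hneg u h, max_eq_right h]; simpa using hc.le
    rw [max_eq_left h.le]
    have h1 := hlip u 0 h.le hu1
    rw [hθ0] at h1
    rw [abs_le]; constructor; swap; · linarith
    have h2 : ∫ v in (0:ℝ)..u, (1 + c * Real.log v) ≤ θ u := by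
      refine intervalIntegral.integral_mono_on_of_le_Ioo h.le
        ((by simp : IntervalIntegrable (fun _ => (1:ℝ)) volume 0 u).add
          (intervalIntegral.intervalIntegrable_log'.const_mul c)) (cS.intervalIntegrable _ _) ?_
      intro v hv
      have e2 : c = 2 / l := by simp only [hl]; field_simp
      simp only [hS]
      rw [max_eq_left hv.1.le, le_div_iff₀ hl0, e2]
      have : (1 + 2 / l * Real.log v) * l = Real.log ((1 + N) * v ^ 2) := by
        rw [Real.log_mul (by positivity) (by have := hv.1; positivity), Real.log_pow, hlog]
        field_simp; push_cast; ring
      rw [this]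
      refine Real.log_le_log (by have := hv.1; positivity) ?_
      have : v ^ 2 ≤ 1 := by
        rw [sq_le_one_iff₀ hv.1.le]; exact hv.2.le.trans hu1
      nlinarith
    have h3 : ∫ v in (0:ℝ)..u, (1 + c * Real.log v) = u + c * (u * Real.log u - u) := by
      rw [intervalIntegral.integral_add (by simp)
        (intervalIntegral.intervalIntegrable_log'.const_mul c),
        intervalIntegral.integral_const_mul, integral_log]
      simp
    have h4 : u - 1 ≤ u * Real.log u := by
      have h5 := Real.one_sub_inv_le_log_of_pos h
      have := mul_le_mul_of_nonneg_left h5 h.le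
      rwa [mul_sub, mul_inv_cancel₀ h.ne', mul_one] at this
    nlinarith
  · intro u v hu hv
    rcases le_total u v with h | h
    · rw [abs_sub_comm, abs_sub_comm u, abs_of_nonneg (sub_nonneg.2 (hmono h)), abs_of_nonneg (sub_nonneg.2 h)]
      exact hlip v u h (le_of_abs_le hv)
    · rw [abs_of_nonneg (sub_nonneg.2 (hmono h)), abs_of_nonneg (sub_nonneg.2 h)]
      exact hlip u v h (le_of_abs_le hu)

end WF

namespace WF
variable {a A B : ℝ → ℝ} {Ca Cb : ℝ} {F G : ℝ → ℝ → ℝ} {η : ℝ → ℝ} {δ : ℝ}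
variable {θ θ' θ'' : ℝ → ℝ} {L : ℝ}

theorem osc_mF (hF : Sol A B F) (hη : Moll η δ) {s o : ℝ}
    (ho : ∀ x y, |x - y| ≤ 2 * δ → |F s x - F s y| ≤ o) (x z : ℝ) (hz : z ∈ Icc (x - δ) (x + δ)) :
    |F s z - mF η F s x| ≤ o := by
  have hδ := hη.pos
  have h1 := mF_le hF hη s x
  have h2 := le_mF hF hη s x
  have h3 := abs_le.1 (ho (x + δ) z (by rw [abs_le]; constructor <;> linarith [hz.1, hz.2]))
  have h4 := abs_le.1 (ho (x - δ) z (by rw [abs_le]; constructor <;> linarith [hz.1, hz.2]))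
  rw [abs_le]; constructor <;> linarith [h3.1, h3.2, h4.1, h4.2]

theorem A_incr (hc : Coef a A B Ca Cb) {m u v κ ε : ℝ} (hκ : ∀ w, |w - m| ≤ κ → |a w - a m| ≤ ε)
    (huv : u ≤ v) (hu : |u - m| ≤ κ) (hv : |v - m| ≤ κ) :
    (a m - ε) * (v - u) ≤ A v - A u ∧ A v - A u ≤ (a m + ε) * (v - u) := by
  rcases huv.eq_or_lt with h | h
  · subst h; simp
  obtain ⟨w, hw, he⟩ := exists_hasDerivAt_eq_slope A a h hc.Acont.continuousOn (fun x _ => hc.hA x)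
  have hv0 : 0 < v - u := by linarith
  have he' : A v - A u = a w * (v - u) := by rw [he]; field_simp
  rw [abs_le] at hu hv
  have h1 := abs_le.1 (hκ w (by rw [abs_le]; constructor <;> linarith [hw.1, hw.2, hu.1, hv.2]))
  rw [he']
  constructor <;> refine mul_le_mul_of_nonneg_right ?_ hv0.le <;> linarith [h1.1, h1.2]

theorem ratio (hc : Coef a A B Ca Cb) (hF : Sol A B F) (hη : Moll η δ) {s o κ ε : ℝ}
    (hκ : ∀ u v, |u - v| ≤ κ → |a u - a v| ≤ ε) (hoκ : o ≤ κ)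
    (ho : ∀ x y, |x - y| ≤ 2 * δ → |F s x - F s y| ≤ o) (x : ℝ) :
    ∃ α, mw η A F s x = α * mp η F s x ∧ 0 ≤ α ∧ α ≤ Ca ∧ |α - a (mF η F s x)| ≤ ε := by
  set m := mF η F s x with hm
  have hosc : ∀ z ∈ Icc (x - δ) (x + δ), |F s z - m| ≤ κ := fun z hz =>
    (osc_mF hF hη ho x z hz).trans hoκ
  have hin : ∀ z ∈ Icc (x - δ) (x + δ), ∀ z' ∈ Icc (x - δ) (x + δ), z ≤ z' → _ := fun z hz z' hz' hzz =>
    A_incr hc (fun w => hκ w m) (hF.mono s hzz) (hosc z hz) (hosc z' hz')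
  have h1 : 0 ≤ mol (deriv η) (fun z => (a m + ε) * F s z - A (F s z)) x :=
    hη.deriv_nonneg x fun z hz z' hz' hzz => by
      have := hin z hz z' hz' hzz
      linarith [this.2]
  have h2 : 0 ≤ mol (deriv η) (fun z => (-1) * ((a m - ε) * F s z - A (F s z))) x :=
    hη.deriv_nonneg x fun z hz z' hz' hzz => by
      have := hin z hz z' hz' hzz
      linarith [this.1]
  rw [mol_smul (-1) x, mpw_sub hc hF hη] at h2
  rw [mpw_sub hc hF hη] at h1
  have h3 := mw_nonneg hc hF hη s x
  have h4 := mw_le hc hF hη s x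
  have hp := mp_nonneg hF hη s x
  have hε : 0 ≤ ε := by
    have h0 : |F s x - m| ≤ κ := hosc x ⟨by linarith [hη.pos], by linarith [hη.pos]⟩
    have := hκ m m (by simpa using (abs_nonneg _).trans h0)
    simpa using this
  rcases hp.eq_or_lt with h | h
  · refine ⟨a m, ?_, hc.a0 m, hc.a1 m, by simpa using hε⟩
    rw [← h] at h4 ⊢
    linarith
  · refine ⟨mw η A F s x / mp η F s x, by field_simp, div_nonneg h3 h.le, ?_, ?_⟩
    · rwa [div_le_iff₀ h]
    · rw [abs_le]
      constructor
      · have : a m - ε ≤ mw η A F s x / mp η F s x := by rw [le_div_iff₀ h]; linarith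
        linarith
      · have : mw η A F s x / mp η F s x ≤ a m + ε := by rw [div_le_iff₀ h]; linarith
        linarith

theorem mB_near (hc : Coef a A B Ca Cb) (hF : Sol A B F) (hη : Moll η δ) {s o : ℝ}
    (ho : ∀ x y, |x - y| ≤ 2 * δ → |F s x - F s y| ≤ o) (x : ℝ) :
    |mB η B F s x - B (mF η F s x)| ≤ Cb * o := by
  have hm := hc.Bcont.measurable.comp (hF.meas_t s)
  have hb : ∀ z, |B (F s z)| ≤ Cb := fun z => hc.Babs (hF.nonneg s z) (hF.le_one s z)
  have hz : ∀ z ∈ Icc (x - δ) (x + δ), |B (F s z) - B (mF η F s x)| ≤ Cb * o := fun z hz =>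
    (hc.lipB _ _).trans (mul_le_mul_of_nonneg_left (osc_mF hF hη ho x z hz) hc.Cb0)
  have h1 : mB η B F s x ≤ B (mF η F s x) + Cb * o :=
    hη.mol_le hm hb x _ (fun z h => by have := (abs_le.1 (hz z h)).2; simp only [comp]; linarith)
  have h2 : B (mF η F s x) - Cb * o ≤ mB η B F s x :=
    hη.le_mol hm hb x _ (fun z h => by have := (abs_le.1 (hz z h)).1; simp only [comp]; linarith)
  rw [abs_le]; constructor <;> linarith

theorem alg1 {p q α β : ℝ} (hp : 0 ≤ p) (hq : 0 ≤ q) (hα : 0 ≤ α) (hβ : 0 ≤ β) :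
    -(|α - β| * (p * q)) ≤ (p - q) * (α * p - β * q) := by
  have hpq := mul_nonneg hp hq
  rcases le_total α β with h | h
  · rw [abs_of_nonpos (by linarith)]
    nlinarith [mul_nonneg hα (sq_nonneg (p - q)), mul_nonneg (sub_nonneg.2 h) (mul_nonneg hq hq)]
  · rw [abs_of_nonneg (by linarith)]
    nlinarith [mul_nonneg hβ (sq_nonneg (p - q)), mul_nonneg (sub_nonneg.2 h) (mul_nonneg hp hp)]

theorem VR_fine (hc : Coef a A B Ca Cb) (hθ : Th θ θ' θ'' L) (hF : Sol A B F) (hG : Sol A B G)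
    (hη : Moll η δ) (s r0 r1 : ℝ) (hr : r0 ≤ r1) {c κ ε o : ℝ} (hc0 : 0 ≤ c) (hε : 0 ≤ ε)
    (hcθ : ∀ u, |u| * θ'' u ≤ c) (hM : ∀ u v, |u| ≤ 1 → |v| ≤ 1 → θ' u - θ' v ≤ 1)
    (hκ0 : 0 < κ) (hκ : ∀ u v, |u - v| ≤ κ → |a u - a v| ≤ ε) (ho0 : 0 ≤ o) (hoκ : o ≤ κ)
    (hoF : ∀ x y, |x - y| ≤ 2 * δ → |F s x - F s y| ≤ o)
    (hoG : ∀ x y, |x - y| ≤ 2 * δ → |G s x - G s y| ≤ o) :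
    ∫ r in Ioc r0 r1, VR θ'' η A B F G r s ≤
      (3 / 2 * ε) * 1 + (Ca * c / κ / 2) * 2 + (Cb * (c + 2 * o * L)) * (2 * (r1 - r0)) := by
  have hCa := hc.Ca0
  have hCb := hc.Cb0
  refine VR_avg_le hc hθ hF hG hη s r0 r1 hr (by positivity) (by positivity) hM fun r x => ?_
  unfold Xi mD mJ
  rw [mF_sh, mp_sh, mw_sh, mB_sh]
  obtain ⟨α, e1, hα0, hα1, hα⟩ := ratio hc hF hη hκ hoκ hoF x
  obtain ⟨β, e2, hβ0, hβ1, hβ⟩ := ratio hc hG hη hκ hoκ hoG (x + r)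
  have hbF := mB_near hc hF hη hoF x
  have hbG := mB_near hc hG hη hoG (x + r)
  have hp := mp_nonneg hF hη s x
  have hq := mp_nonneg hG hη s (x + r)
  rw [e1, e2]
  generalize mF η F s x = P at *
  generalize mF η G s (x + r) = Q at *
  generalize mp η F s x = p at *
  generalize mp η G s (x + r) = q at *
  generalize mB η B F s x = u at *
  generalize mB η B G s (x + r) = v at *
  have hB := hc.lipB P Q
  have ht0 := hθ.nn (P - Q)
  have ht1 := hθ.bd (P - Q)
  have htc := hcθ (P - Q)
  generalize θ'' (P - Q) = t at *
  have hpq := mul_nonneg hp hq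
  have huv : |u - v| ≤ Cb * (|P - Q| + 2 * o) := by
    rw [abs_le] at *
    constructor <;> linarith [hbF.1, hbF.2, hbG.1, hbG.2, hB.1, hB.2]
  have h1 := alg1 hp hq hα0 hβ0
  have h2 : t * |α - β| ≤ 3 * ε * t + Ca * c / κ := by
    have hcc : 0 ≤ Ca * c / κ := by positivity
    rcases le_or_gt |P - Q| κ with h | h
    · have h3 := hκ P Q h
      have : |α - β| ≤ 3 * ε := by
        rw [abs_le] at *
        constructor <;> linarith [hα.1, hα.2, hβ.1, hβ.2, h3.1, h3.2]
      nlinarith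
    · have h3 : |α - β| ≤ Ca := by rw [abs_le]; constructor <;> linarith
      have h4 : t ≤ c / κ := by
        rw [le_div_iff₀ hκ0]; nlinarith
      have h5 : t * |α - β| ≤ c / κ * Ca := by
        apply mul_le_mul h4 h3 (abs_nonneg _); positivity
      have : 0 ≤ 3 * ε * t := by positivity
      have : c / κ * Ca = Ca * c / κ := by ring
      linarith
  have h3 : (p - q) * (u - v) ≤ (p + q) * (Cb * (|P - Q| + 2 * o)) := by
    refine (le_abs_self _).trans ?_
    rw [abs_mul]
    refine mul_le_mul ?_ huv (abs_nonneg _) (by linarith)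
    rw [abs_le]; constructor <;> linarith
  have h4 : t * (|P - Q| + 2 * o) ≤ c + 2 * o * L := by nlinarith
  have h5 : t * ((p - q) * (u - v)) ≤ Cb * (c + 2 * o * L) * (p + q) := by
    calc t * ((p - q) * (u - v)) ≤ t * ((p + q) * (Cb * (|P - Q| + 2 * o))) :=
          mul_le_mul_of_nonneg_left h3 ht0
      _ = (Cb * (p + q)) * (t * (|P - Q| + 2 * o)) := by ring
      _ ≤ (Cb * (p + q)) * (c + 2 * o * L) := mul_le_mul_of_nonneg_left h4 (by positivity)
      _ = _ := by ring
  have h6 : -(t * ((p - q) * (α * p - β * q))) ≤ (3 * ε * t + Ca * c / κ) * (p * q) := by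
    calc -(t * ((p - q) * (α * p - β * q))) ≤ t * (|α - β| * (p * q)) := by nlinarith
      _ = (t * |α - β|) * (p * q) := by ring
      _ ≤ _ := mul_le_mul_of_nonneg_right h2 hpq
  have e : -(t * (p - q) * (1 / 2 * (α * p) - u - (1 / 2 * (β * q) - v))) =
    1 / 2 * (-(t * ((p - q) * (α * p - β * q)))) + t * ((p - q) * (u - v)) := by ring
  rw [e]
  calc _ ≤ 1 / 2 * ((3 * ε * t + Ca * c / κ) * (p * q)) + Cb * (c + 2 * o * L) * (p + q) := by
        linarith
    _ = _ := by ring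

theorem VR_crude (hc : Coef a A B Ca Cb) (hθ : Th θ θ' θ'' L) (hF : Sol A B F) (hG : Sol A B G)
    (hη : Moll η δ) (s r0 r1 : ℝ) (hr : r0 ≤ r1)
    (hM : ∀ u v, |u| ≤ 1 → |v| ≤ 1 → θ' u - θ' v ≤ 1) :
    ∫ r in Ioc r0 r1, VR θ'' η A B F G r s ≤
      Ca * 1 + 0 * 2 + (2 * Cb * L) * (2 * (r1 - r0)) := by
  have hCa := hc.Ca0
  have hCb := hc.Cb0
  refine VR_avg_le hc hθ hF hG hη s r0 r1 hr (by positivity) le_rfl hM fun r x => ?_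
  unfold Xi mD mJ
  rw [mF_sh, mp_sh, mw_sh, mB_sh]
  have hbF := mB_abs hc hF hη s x
  have hbG := mB_abs hc hG hη s (x + r)
  have hp := mp_nonneg hF hη s x
  have hq := mp_nonneg hG hη s (x + r)
  have hw := mw_nonneg hc hF hη s x
  have hw1 := mw_le hc hF hη s x
  have hz := mw_nonneg hc hG hη s (x + r)
  have hz1 := mw_le hc hG hη s (x + r)
  have ht0 := hθ.nn (mF η F s x - mF η G s (x + r))
  have ht1 := hθ.bd (mF η F s x - mF η G s (x + r))
  generalize θ'' (mF η F s x - mF η G s (x + r)) = t at *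
  generalize mp η F s x = p at *
  generalize mp η G s (x + r) = q at *
  generalize mB η B F s x = u at *
  generalize mB η B G s (x + r) = v at *
  generalize mw η A F s x = w at *
  generalize mw η A G s (x + r) = z at *
  have h1 : -((p - q) * (w - z)) ≤ 2 * Ca * (p * q) := by
    nlinarith [mul_nonneg hp hw, mul_nonneg hq hz, mul_le_mul_of_nonneg_left hz1 hp, mul_le_mul_of_nonneg_left hw1 hq]
  have h3 : (p - q) * (u - v) ≤ (p + q) * (2 * Cb) := by
    refine (le_abs_self _).trans ?_
    rw [abs_mul]
    refine mul_le_mul ?_ ?_ (abs_nonneg _) (by linarith)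
    · rw [abs_le]; constructor <;> linarith
    · rw [abs_le] at *; constructor <;> linarith [hbF.1, hbF.2, hbG.1, hbG.2]
  have h5 : t * ((p - q) * (u - v)) ≤ L * ((p + q) * (2 * Cb)) := by
    have : 0 ≤ (p + q) * (2 * Cb) := by positivity
    nlinarith
  have e : -(t * (p - q) * (1 / 2 * w - u - (1 / 2 * z - v))) =
    1 / 2 * (t * (-((p - q) * (w - z)))) + t * ((p - q) * (u - v)) := by ring
  rw [e]
  have h6 := mul_le_mul_of_nonneg_left h1 ht0
  calc _ ≤ 1 / 2 * (t * (2 * Ca * (p * q))) + L * ((p + q) * (2 * Cb)) := by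
        linarith
    _ = _ := by ring

end WF

namespace WF
variable {a A B : ℝ → ℝ} {Ca Cb : ℝ} {F G : ℝ → ℝ → ℝ} {η : ℝ → ℝ} {δ : ℝ}
variable {θ θ' θ'' : ℝ → ℝ} {L : ℝ}

theorem J_anti (hθ : Th θ θ' θ'' L) (hθm : Monotone θ) (hF : Sol A B F) (hG : Sol A B G)
    (hη : Moll η δ) (t : ℝ) : Antitone (fun r => ∫ x, θ (mD η F (sh G r) t x)) := by
  intro r r' hr
  refine integral_mono (theta_int hθ hF (hG.sh r') hη t) (theta_int hθ hF (hG.sh r) hη t) fun x => ?_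
  refine hθm ?_
  unfold mD
  rw [mF_sh, mF_sh]
  have : mF η G t (x + r) ≤ mF η G t (x + r') := hη.mol_mono (hG.mono t) (hG.abs t) (by linarith)
  linarith

theorem mF_L1 (hF : Sol A B F) (hη : Moll η δ) (t : ℝ) :
    Integrable (fun x => F t (x + δ) - F t (x - δ)) ∧ ∫ x, (F t (x + δ) - F t (x - δ)) = 2 * δ ∧
    ∀ x, |mF η F t x - F t x| ≤ F t (x + δ) - F t (x - δ) := by
  have h1 := hF.int_shift t δ
  have h2 := hF.int_shift t (-δ)
  have e : (fun x => F t (x + δ) - F t (x - δ)) =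
      fun x => (F t (x + δ) - F t x) - (F t (x + -δ) - F t x) := by
    ext x; rw [← sub_eq_add_neg]; ring
  refine ⟨?_, ?_, fun x => ?_⟩
  · rw [e]; exact h1.1.sub h2.1
  · rw [e, integral_sub h1.1 h2.1, h1.2, h2.2]; ring
  · have hδ := hη.pos
    have := mF_le hF hη t x
    have := le_mF hF hη t x
    have := hF.mono t (show x ≤ x + δ by linarith)
    have := hF.mono t (show x - δ ≤ x by linarith)
    rw [abs_le]; constructor <;> linarith

theorem FG_int (hF : Sol A B F) (hG : Sol A B G) (t : ℝ) : Integrable (fun x => F t x - G t x) := by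
  refine ((hF.int1 t).sub (hG.int1 t)).congr (Eventually.of_forall fun x => ?_)
  simp

theorem FG_abs (hF : Sol A B F) (hG : Sol A B G) (t x : ℝ) : |F t x - G t x| ≤ 1 := by
  have := hF.nonneg t x
  have := hF.le_one t x
  have := hG.nonneg t x
  have := hG.le_one t x
  rw [abs_le]; constructor <;> linarith

theorem thetaFG_int (hθ : Th θ θ' θ'' L) (hF : Sol A B F) (hG : Sol A B G) (t : ℝ) :
    Integrable (fun x => θ (F t x - G t x)) := by
  refine Integrable.mono' ((FG_int hF hG t).abs.const_mul L) ?_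
    (Eventually.of_forall fun x => hθ.lin0 _ (FG_abs hF hG t x))
  exact (hθ.c0.measurable.comp ((hF.meas_t t).sub (hG.meas_t t))).aestronglyMeasurable

theorem J_lim (hθ : Th θ θ' θ'' L)
    (hlip : ∀ u v, |u| ≤ 1 → |v| ≤ 1 → |θ u - θ v| ≤ |u - v|) (hF : Sol A B F) (hG : Sol A B G)
    (hη : Moll η δ) (t : ℝ) :
    |(∫ x, θ (mD η F G t x)) - ∫ x, θ (F t x - G t x)| ≤ 4 * δ := by
  obtain ⟨f1, f2, f3⟩ := mF_L1 hF hη t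
  obtain ⟨g1, g2, g3⟩ := mF_L1 hG hη t
  rw [← integral_sub (theta_int hθ hF hG hη t) (thetaFG_int hθ hF hG t), ← Real.norm_eq_abs]
  refine (norm_integral_le_of_norm_le (f1.add g1) (Eventually.of_forall fun x => ?_)).trans ?_
  · rw [Real.norm_eq_abs]
    refine (hlip _ _ (mD_abs hF hG hη t x) (FG_abs hF hG t x)).trans ?_
    have e : mD η F G t x - (F t x - G t x) = (mF η F t x - F t x) - (mF η G t x - G t x) := by
      unfold mD; ring
    rw [e]
    exact (abs_sub _ _).trans (add_le_add (f3 x) (g3 x))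
  · simp only [Pi.add_apply]
    rw [integral_add f1 g1, f2, g2]; linarith

theorem step1 (hc : Coef a A B Ca Cb) (hθ : Th θ θ' θ'' L) (hF : Sol A B F) (hG : Sol A B G)
    {c κ ε : ℝ} (hc0 : 0 < c) (hε : 0 ≤ ε)
    (hcθ : ∀ u, |u| * θ'' u ≤ c) (hM : ∀ u v, |u| ≤ 1 → |v| ≤ 1 → θ' u - θ' v ≤ 1)
    (hlip : ∀ u v, |u| ≤ 1 → |v| ≤ 1 → |θ u - θ v| ≤ |u - v|) (hθm : Monotone θ)
    (hκ0 : 0 < κ) (hκ : ∀ u v, |u - v| ≤ κ → |a u - a v| ≤ ε)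
    (t1 t2 r0 r1 : ℝ) (h1 : 0 ≤ t1) (h2 : t1 ≤ t2) (hr : r0 ≤ r1) :
    (r1 - r0) * ((∫ x, θ (F t2 x - sh G r1 t2 x)) - ∫ x, θ (F t1 x - sh G r0 t1 x)) ≤
    (3 / 2 * ε + Ca * c / κ + Cb * (2 * c) * (2 * (r1 - r0))) * (t2 - t1) := by
  have hCa := hc.Ca0
  have hCb := hc.Cb0
  have hL := hθ.L0
  choose η hη using fun n : ℕ => exists_moll (1 / ((n:ℝ) + 1)) (by positivity)
  set E := 3 / 2 * ε + Ca * c / κ + Cb * (2 * c) * (2 * (r1 - r0)) with hE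
  have hE0 : 0 ≤ E := by
    have : 0 ≤ r1 - r0 := by linarith
    positivity
  set K := Ca * 1 + 0 * 2 + (2 * Cb * L) * (2 * (r1 - r0)) with hK
  have hK0 : 0 ≤ K := by
    have : 0 ≤ r1 - r0 := by linarith
    positivity
  set h : ℕ → ℝ → ℝ := fun n s => ∫ r in Ioc r0 r1, VR θ'' (η n) A B F G r s with hh
  have hint : ∀ n, IntegrableOn (h n) (Ioc t1 t2) := fun n => VRs_int hc hθ hF hG (hη n) t1 t2 r0 r1
  have hδ : Tendsto (fun n : ℕ => 1 / ((n:ℝ) + 1)) atTop (𝓝 0) := tendsto_one_div_add_atTop_nhds_zero_nat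
  have hmax : ∀ n, IntegrableOn (fun s => max (h n s - E) 0) (Ioc t1 t2) := fun n =>
    ((hint n).sub (integrable_const E)).pos_part
  have hlim : Tendsto (fun n => ∫ s in Ioc t1 t2, max (h n s - E) 0) atTop (𝓝 0) := by
    suffices H : Tendsto (fun n => ∫ s in Ioc t1 t2, max (h n s - E) 0) atTop
        (𝓝 (∫ s in Ioc t1 t2, (0:ℝ))) by simpa using H
    refine tendsto_integral_of_dominated_convergence (fun _ => K) (fun n => (hmax n).aestronglyMeasurable)
      (integrable_const K) (fun n => Eventually.of_forall fun s => ?_) ?_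
    · rw [Real.norm_eq_abs, abs_of_nonneg (le_max_right _ _)]
      refine max_le ?_ hK0
      have := VR_crude hc hθ hF hG (hη n) s r0 r1 hr hM
      simp only [hh]; linarith
    · filter_upwards [ae_cont hc hF t1 t2 h1 h2, ae_cont hc hG t1 t2 h1 h2] with s hsF hsG
      set o := min κ (c / (2 * (L + 1))) with ho
      have ho0 : 0 < o := lt_min hκ0 (by positivity)
      have hoL : 2 * o * L ≤ c := by
        have h3 : o ≤ c / (2 * (L + 1)) := min_le_right _ _
        rw [le_div_iff₀ (by positivity)] at h3
        nlinarith
      obtain ⟨d1, hd1, hd1'⟩ := Metric.uniformContinuous_iff.1 (hF.uc s hsF) o ho0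
      obtain ⟨d2, hd2, hd2'⟩ := Metric.uniformContinuous_iff.1 (hG.uc s hsG) o ho0
      refine tendsto_const_nhds.congr' ?_
      have hev : ∀ᶠ n : ℕ in atTop, 1 / ((n:ℝ) + 1) < min d1 d2 / 2 :=
        hδ.eventually_lt_const (by positivity)
      filter_upwards [hev] with n hn
      have hn1 : 2 * (1 / ((n:ℝ) + 1)) < d1 := by have := min_le_left d1 d2; linarith
      have hn2 : 2 * (1 / ((n:ℝ) + 1)) < d2 := by have := min_le_right d1 d2; linarith
      have := VR_fine hc hθ hF hG (hη n) s r0 r1 hr hc0.le hε hcθ hM hκ0 hκ ho0.le (min_le_left _ _)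
        (fun x y hxy => (hd1' (lt_of_le_of_lt hxy hn1)).le)
        (fun x y hxy => (hd2' (lt_of_le_of_lt hxy hn2)).le)
      have h5 : Cb * (c + 2 * o * L) * (2 * (r1 - r0)) ≤ Cb * (2 * c) * (2 * (r1 - r0)) := by
        refine mul_le_mul_of_nonneg_right (mul_le_mul_of_nonneg_left (by linarith) hCb) (by linarith)
      symm
      refine max_eq_right ?_
      simp only [hh, hE]; linarith
  have hJ : ∀ t r, Tendsto (fun n => ∫ x, θ (mD (η n) F (sh G r) t x)) atTop
      (𝓝 (∫ x, θ (F t x - sh G r t x))) := fun t r => by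
    rw [tendsto_iff_dist_tendsto_zero]
    refine squeeze_zero (fun _ => dist_nonneg) (fun n => J_lim hθ hlip hF (hG.sh r) (hη n) t) ?_
    simpa using hδ.const_mul 4
  have hn : ∀ n, (r1 - r0) * ((∫ x, θ (mD (η n) F (sh G r1) t2 x)) - ∫ x, θ (mD (η n) F (sh G r0) t1 x)) ≤
      E * (t2 - t1) + ∫ s in Ioc t1 t2, max (h n s - E) 0 := fun n => by
    have hg := GIavg hc hθ hF hG (hη n) t1 t2 h1 h2 r0 r1
    have a1 := J_anti hθ hθm hF hG (hη n) t1
    have a2 := J_anti hθ hθm hF hG (hη n) t2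
    have i1 : IntegrableOn _ (Ioc r0 r1) := ((a1.antitoneOn (Icc r0 r1)).integrableOn_isCompact isCompact_Icc).mono_set Ioc_subset_Icc_self
    have i2 : IntegrableOn _ (Ioc r0 r1) := ((a2.antitoneOn (Icc r0 r1)).integrableOn_isCompact isCompact_Icc).mono_set Ioc_subset_Icc_self
    have lo : (r1 - r0) * ((∫ x, θ (mD (η n) F (sh G r1) t2 x)) - ∫ x, θ (mD (η n) F (sh G r0) t1 x)) ≤
        ∫ r in Ioc r0 r1, ((∫ x, θ (mD (η n) F (sh G r) t2 x)) - ∫ x, θ (mD (η n) F (sh G r) t1 x)) := by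
      calc _ = ∫ r in Ioc r0 r1, ((∫ x, θ (mD (η n) F (sh G r1) t2 x)) - ∫ x, θ (mD (η n) F (sh G r0) t1 x)) := by
            simp [hr]
        _ ≤ _ := by
            refine setIntegral_mono_on (by simp) (i2.sub i1) measurableSet_Ioc fun r hr' => ?_
            exact sub_le_sub (a2 hr'.2) (a1 hr'.1.le)
    refine lo.trans ?_
    rw [hg]
    calc _ ≤ ∫ s in Ioc t1 t2, (E + max (h n s - E) 0) := by
          refine setIntegral_mono_on (hint n) ((integrable_const E).add (hmax n)) measurableSet_Ioc
            fun s _ => ?_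
          have := le_max_left (h n s - E) 0
          simp only [hh] at *
          linarith
      _ = _ := by
          rw [integral_add (integrable_const E) (hmax n)]
          simp [h2]; ring
  refine le_of_tendsto_of_tendsto (((hJ t2 r1).sub (hJ t1 r0)).const_mul (r1 - r0))
    (hlim.const_add (E * (t2 - t1))) (Eventually.of_forall hn) |>.trans_eq (add_zero _)

theorem pos_int (hF : Sol A B F) (hG : Sol A B G) (t : ℝ) :
    Integrable (fun x => max (F t x - G t x) 0) := (FG_int hF hG t).pos_part

theorem step2 (hc : Coef a A B Ca Cb) (hF : Sol A B F) (hG : Sol A B G)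
    (t1 t2 r0 r1 : ℝ) (h1 : 0 ≤ t1) (h2 : t1 ≤ t2) (hr : r0 < r1) :
    ∫ x, max (F t2 x - sh G r1 t2 x) 0 ≤ ∫ x, max (F t1 x - sh G r0 t1 x) 0 := by
  have hr0 : 0 < r1 - r0 := by linarith
  suffices H : ∀ ε > 0, (r1 - r0) * ((∫ x, max (F t2 x - sh G r1 t2 x) 0) -
      ∫ x, max (F t1 x - sh G r0 t1 x) 0) ≤ (3 / 2 * ε) * (t2 - t1) by
    have H2 : (r1 - r0) * ((∫ x, max (F t2 x - sh G r1 t2 x) 0) -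
      ∫ x, max (F t1 x - sh G r0 t1 x) 0) ≤ 0 := by
      have hl : Tendsto (fun ε : ℝ => (3 / 2 * ε) * (t2 - t1)) (𝓝[>] 0) (𝓝 0) := by
        have : Continuous (fun ε : ℝ => (3 / 2 * ε) * (t2 - t1)) := by fun_prop
        have h3 := this.tendsto 0
        simp only [mul_zero, zero_mul] at h3
        exact h3.mono_left nhdsWithin_le_nhds
      refine ge_of_tendsto hl ?_
      filter_upwards [self_mem_nhdsWithin] with ε hε using H ε hε
    by_contra! h
    have := mul_pos hr0 (sub_pos.2 h)
    linarith
  intro ε hε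
  obtain ⟨d, hd, hd'⟩ := Metric.uniformContinuous_iff.1 hc.auc ε hε
  have hκ : ∀ u v, |u - v| ≤ d / 2 → |a u - a v| ≤ ε := fun u v huv =>
    (hd' (show dist u v < d by rw [Real.dist_eq]; linarith)).le
  choose θ θ' θ'' L hθ hcθ hM hap hlip hmono using fun n : ℕ => exists_th (1 / ((n:ℝ) + 1)) (by positivity)
  have hδ : Tendsto (fun n : ℕ => 1 / ((n:ℝ) + 1)) atTop (𝓝 0) := tendsto_one_div_add_atTop_nhds_zero_nat
  have hI : ∀ t r, Tendsto (fun n => ∫ x, θ n (F t x - sh G r t x)) atTop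
      (𝓝 (∫ x, max (F t x - sh G r t x) 0)) := fun t r => by
    refine tendsto_integral_of_dominated_convergence (fun x => |F t x - sh G r t x|)
      (fun n => (thetaFG_int (hθ n) hF (hG.sh r) t).aestronglyMeasurable) (FG_int hF (hG.sh r) t).abs
      (fun n => Eventually.of_forall fun x => ?_) (Eventually.of_forall fun x => ?_)
    · have := hlip n _ 0 (FG_abs hF (hG.sh r) t x) (by simp)
      rwa [(hθ n).z0, sub_zero, sub_zero] at this
    · rw [tendsto_iff_dist_tendsto_zero]
      exact squeeze_zero (fun _ => dist_nonneg) (fun n => hap n _ (FG_abs hF (hG.sh r) t x)) hδ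
  have hR : Tendsto (fun n : ℕ => (3 / 2 * ε + Ca * (1 / ((n:ℝ) + 1)) / (d / 2) +
      Cb * (2 * (1 / ((n:ℝ) + 1))) * (2 * (r1 - r0))) * (t2 - t1)) atTop (𝓝 ((3 / 2 * ε) * (t2 - t1))) := by
    have : Continuous (fun c : ℝ => (3 / 2 * ε + Ca * c / (d / 2) +
      Cb * (2 * c) * (2 * (r1 - r0))) * (t2 - t1)) := by fun_prop
    have h3 := (this.tendsto 0).comp hδ
    simpa [Function.comp_def] using h3
  exact le_of_tendsto_of_tendsto (((hI t2 r1).sub (hI t1 r0)).const_mul (r1 - r0)) hR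
    (Eventually.of_forall fun n => step1 hc (hθ n) hF hG (by positivity) hε.le (hcθ n) (hM n) (hlip n)
      (hmono n) (by positivity) hκ t1 t2 r0 r1 h1 h2 hr.le)

theorem main_contr (hc : Coef a A B Ca Cb) (hF : Sol A B F) (hG : Sol A B G)
    (t1 t2 r : ℝ) (h1 : 0 ≤ t1) (h2 : t1 ≤ t2) :
    ∫ x, max (F t2 x - G t2 (x + r)) 0 ≤ ∫ x, max (F t1 x - G t1 (x + r)) 0 := by
  refine le_of_forall_pos_le_add fun e he => ?_
  have h3 := step2 hc hF hG t1 t2 r (r + e) h1 h2 (by linarith)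
  have hs := (hG.sh r).int_shift t2 e
  have h4 : ∫ x, max (F t2 x - sh G r t2 x) 0 ≤ (∫ x, max (F t2 x - sh G (r + e) t2 x) 0) + e := by
    have : (∫ x, max (F t2 x - sh G (r + e) t2 x) 0) + e =
        ∫ x, (max (F t2 x - sh G (r + e) t2 x) 0 + (sh G r t2 (x + e) - sh G r t2 x)) := by
      rw [integral_add (pos_int hF (hG.sh (r + e)) t2) hs.1, hs.2]
    rw [this]
    refine integral_mono (pos_int hF (hG.sh r) t2) ((pos_int hF (hG.sh (r + e)) t2).add hs.1) fun x => ?_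
    have e1 : sh G r t2 (x + e) = sh G (r + e) t2 x := by unfold sh; ring_nf
    have e2 : sh G r t2 x ≤ sh G (r + e) t2 x := hG.mono t2 (by linarith)
    simp only [e1]
    refine max_le ?_ ?_
    · linarith [le_max_left (F t2 x - sh G (r + e) t2 x) 0]
    · linarith [le_max_right (F t2 x - sh G (r + e) t2 x) 0]
  exact h4.trans (add_le_add_left h3 e)

end WF

namespace WF

def cl (a : ℝ → ℝ) (u : ℝ) : ℝ := a (projIcc (0:ℝ) 1 zero_le_one u)

theorem cl_uc {a : ℝ → ℝ} (ha : ContinuousOn a (Icc 0 1)) : UniformContinuous (cl a) := by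
  have h1 : Continuous ((Icc (0:ℝ) 1).domRestrict a) := continuousOn_iff_continuous_domRestrict.1 ha
  have h2 := CompactSpace.uniformContinuous_of_continuous h1
  exact h2.comp (LipschitzWith.projIcc zero_le_one).uniformContinuous

theorem cl_bdd {a : ℝ → ℝ} (ha : ContinuousOn a (Icc 0 1)) : ∃ C, 0 ≤ C ∧ ∀ u, |cl a u| ≤ C := by
  obtain ⟨C, hC⟩ := isCompact_Icc.exists_bound_of_continuousOn ha
  exact ⟨C, (norm_nonneg _).trans (hC 0 ⟨le_rfl, zero_le_one⟩), fun u => hC _ (projIcc (0:ℝ) 1 zero_le_one u).2⟩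

theorem cl_eq {a : ℝ → ℝ} {u : ℝ} (hu : u ∈ Icc (0:ℝ) 1) : cl a u = a u := by
  unfold cl; rw [projIcc_of_mem zero_le_one hu]

theorem prim_cl {a : ℝ → ℝ} {u : ℝ} (hu : u ∈ Icc (0:ℝ) 1) : primitive (cl a) u = primitive a u := by
  unfold primitive
  refine intervalIntegral.integral_congr fun v hv => ?_
  rw [uIcc_of_le hu.1] at hv
  exact cl_eq ⟨hv.1, hv.2.trans hu.2⟩

theorem mkCoef {a b : ℝ → ℝ} (ha : ContinuousOn a (Icc 0 1)) (hb : ContinuousOn b (Icc 0 1))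
    (ha0 : ∀ u ∈ Icc (0:ℝ) 1, 0 ≤ a u) (hD1 : StrictMonoOn (primitive a) (Icc 0 1)) :
    ∃ Ca Cb, Coef (cl a) (primitive (cl a)) (primitive (cl b)) Ca Cb := by
  obtain ⟨Ca, hCa, hCa'⟩ := cl_bdd ha
  obtain ⟨Cb, hCb, hCb'⟩ := cl_bdd hb
  have ca := (cl_uc ha).continuous
  have cb := (cl_uc hb).continuous
  refine ⟨Ca, Cb, hCa, hCb, fun u => ?_, fun u => ha0 _ (projIcc (0:ℝ) 1 zero_le_one u).2,
    fun u => le_of_abs_le (hCa' u), cl_uc ha, by simp [primitive], by simp [primitive], ?_, ?_⟩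
  · exact intervalIntegral.integral_hasDerivAt_right (ca.intervalIntegrable _ _)
      (ca.stronglyMeasurableAtFilter _ _) ca.continuousAt
  · intro u hu v hv huv
    rw [prim_cl hu, prim_cl hv]; exact hD1 hu hv huv
  · intro u v
    have : primitive (cl b) u - primitive (cl b) v = ∫ w in v..u, cl b w :=
      intervalIntegral.integral_interval_sub_left (cb.intervalIntegrable _ _) (cb.intervalIntegrable _ _)
    rw [this]
    exact intervalIntegral.norm_integral_le_of_norm_le_const (f := cl b) (C := Cb) fun w _ => hCb' w

theorem moment_bound (P : Measure ℝ) [IsProbabilityMeasure P] :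
    ∫⁻ x, ‖(P (Iic x)).toReal - Hs x‖ₑ ≤ ∫⁻ y, ‖y‖ₑ ∂P := by
  have hm : Measurable (fun q : ℝ × ℝ => Hs (q.1 - q.2) - Hs q.1) :=
    (Hs_meas.comp (measurable_fst.sub measurable_snd)).sub (Hs_meas.comp measurable_fst)
  have hb : ∀ x y, ‖Hs (x - y) - Hs x‖ ≤ 1 := fun x y => by
    unfold Hs; split_ifs <;> simp
  have hb' : ∀ x, ‖Hs x‖ ≤ 1 := fun x => by unfold Hs; split_ifs <;> simp
  have h1 : ∀ x, (P (Iic x)).toReal - Hs x = ∫ y, (Hs (x - y) - Hs x) ∂P := fun x => by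
    have hi : Integrable (fun y => Hs (x - y)) P :=
      Integrable.of_bound (Hs_meas.comp (measurable_const.sub measurable_id)).aestronglyMeasurable 1
        (Eventually.of_forall fun y => hb' _)
    rw [integral_sub hi (integrable_const _)]
    have : (fun y => Hs (x - y)) = (Iic x).indicator 1 := by
      ext y; unfold Hs
      simp [indicator_apply]
    rw [this, integral_indicator_one measurableSet_Iic]
    simp [Measure.real]
  calc ∫⁻ x, ‖(P (Iic x)).toReal - Hs x‖ₑ ≤ ∫⁻ x, ∫⁻ y, ‖Hs (x - y) - Hs x‖ₑ ∂P := by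
        refine lintegral_mono fun x => ?_
        rw [h1]; exact enorm_integral_le_lintegral_enorm _
    _ = ∫⁻ y, (∫⁻ x, ‖Hs (x - y) - Hs x‖ₑ) ∂P := by
        exact lintegral_lintegral_swap (f := fun x y => ‖Hs (x - y) - Hs x‖ₑ) hm.enorm.aemeasurable
    _ = ∫⁻ y, ‖y‖ₑ ∂P := by
        refine lintegral_congr fun y => ?_
        have : (fun x => ‖Hs (x - y) - Hs x‖ₑ) = (Ico (min 0 y) (max 0 y)).indicator 1 := by
          ext x
          unfold Hs
          rcases le_total 0 y with h | h
          · rw [min_eq_left h, max_eq_right h]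
            by_cases h1 : y ≤ x
            · have : 0 ≤ x := h.trans h1
              simp [indicator_apply, h1, this]
            · by_cases h2 : 0 ≤ x
              · simp [indicator_apply, h1, h2, not_le.1 h1]
              · simp [indicator_apply, h1, h2]
          · rw [min_eq_right h, max_eq_left h]
            by_cases h1 : 0 ≤ x
            · have : y ≤ x := h.trans h1
              simp [indicator_apply, h1, this]
            · by_cases h2 : y ≤ x
              · simp [indicator_apply, h1, h2, not_le.1 h1]
              · simp [indicator_apply, h1, h2]
        rw [this, lintegral_indicator_one measurableSet_Ico, Real.volume_Ico, max_sub_min_eq_abs',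
          zero_sub, abs_neg, Real.enorm_eq_ofReal_abs]

theorem mkSol {a b : ℝ → ℝ} (ha : ContinuousOn a (Icc 0 1)) (hb : ContinuousOn b (Icc 0 1))
    {F₀ : ℝ → ℝ} {F : ℝ → ℝ → ℝ} (hF : IsWeakSolution (primitive a) (primitive b) F₀ F)
    (hm : MemF F) : Sol (primitive (cl a)) (primitive (cl b)) (fun t x => F (max t 0) x) := by
  obtain ⟨P, hPc, hP1, hP2, hPF⟩ := hm
  have hmax : Continuous (fun t : ℝ => max t 0) := by fun_prop
  have hP : Continuous (fun t => P (max t 0)) :=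
    hPc.comp_continuous hmax (fun t => le_max_right t 0)
  have hFe : ∀ t x, F (max t 0) x = ((P (max t 0) : Measure ℝ) (Iic x)).toReal :=
    fun t x => hPF _ (le_max_right _ _) x
  have hcdf : ∀ t, F (max t 0) = ProbabilityTheory.cdf (P (max t 0) : Measure ℝ) := fun t => by
    ext x; rw [hFe, ProbabilityTheory.cdf_eq_real]; rfl
  have hmono : ∀ t, Monotone (F (max t 0)) := fun t => by
    rw [hcdf]; exact ProbabilityTheory.monotone_cdf _
  have hnn : ∀ t x, 0 ≤ F (max t 0) x := fun t x => by
    rw [hcdf]; exact ProbabilityTheory.cdf_nonneg _ x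
  have hle1 : ∀ t x, F (max t 0) x ≤ 1 := fun t x => by
    rw [hcdf]; exact ProbabilityTheory.cdf_le_one _ x
  have husc : UpperSemicontinuous (uncurry (fun t x => F (max t 0) x)) := by
    rintro ⟨t, x⟩ c hc
    simp only [uncurry_apply_pair] at hc
    have hrc : ContinuousWithinAt (F (max t 0)) (Ioi x) x := by
      rw [hcdf]
      exact ((ProbabilityTheory.cdf (P (max t 0) : Measure ℝ)).right_continuous x).mono Ioi_subset_Ici_self
    have h1 : ∀ᶠ y in 𝓝[>] x, F (max t 0) y < c := hrc.eventually_lt_const hc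
    obtain ⟨y, hy, hxy⟩ := (h1.and self_mem_nhdsWithin).exists
    have h2 := ProbabilityMeasure.limsup_measure_closed_le_of_tendsto (hP.tendsto t) (isClosed_Iic (a := y))
    have h3 : ∀ᶠ t' in 𝓝 t, (P (max t' 0) : Measure ℝ) (Iic y) < ENNReal.ofReal c := by
      refine eventually_lt_of_limsup_lt (lt_of_le_of_lt h2 ?_)
      rw [hFe] at hy
      rw [ENNReal.lt_ofReal_iff_toReal_lt (measure_ne_top _ _)]
      exact hy
    have h4 : ∀ᶠ x' in 𝓝 x, x' < y := Iio_mem_nhds hxy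
    rw [nhds_prod_eq]
    filter_upwards [h3.prod_mk h4] with q hq
    have h5 : F (max q.1 0) q.2 ≤ F (max q.1 0) y := hmono _ hq.2.le
    refine lt_of_le_of_lt h5 ?_
    rw [hFe]
    exact (ENNReal.lt_ofReal_iff_toReal_lt (measure_ne_top _ _)).1 hq.1
  have hmeas : Measurable (uncurry (fun t x => F (max t 0) x)) := husc.measurable
  have hi1 : ∀ t, ∫⁻ x, ‖F (max t 0) x - Hs x‖ₑ ≤ ∫⁻ y, ‖y‖ₑ ∂(P (max t 0) : Measure ℝ) := fun t => by
    have := moment_bound (P (max t 0) : Measure ℝ)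
    simpa only [hFe] using this
  refine ⟨hmono, hnn, hle1, ?_, ?_, hmeas, ?_, ?_, ?_, ?_⟩
  · intro t; simp only [hcdf]; exact ProbabilityTheory.tendsto_cdf_atBot _
  · intro t; simp only [hcdf]; exact ProbabilityTheory.tendsto_cdf_atTop _
  · intro t0
    have hcount := Measure.countable_meas_level_set_pos (μ := (P (max t0 0) : Measure ℝ)) (g := fun x : ℝ => x) measurable_id
    filter_upwards [hcount.ae_notMem volume] with x hx
    have hx0 : (P (max t0 0) : Measure ℝ) (frontier (Iic x)) = 0 := by
      rw [frontier_Iic]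
      simpa using hx
    have h1 := ProbabilityMeasure.tendsto_measure_of_null_frontier_of_tendsto' (hP.tendsto t0) hx0
    have h2 := (ENNReal.tendsto_toReal (measure_ne_top (P (max t0 0) : Measure ℝ) (Iic x))).comp h1
    unfold ContinuousAt
    simp only [hFe]
    exact h2
  · intro t
    refine ⟨((hmono t).measurable.sub Hs_meas).aestronglyMeasurable, ?_⟩
    refine lt_of_le_of_lt (hi1 t) ?_
    have := (hP1 (max t 0) (le_max_right _ _)).2
    simpa [HasFiniteIntegral] using this
  · intro t1 t2 h1
    have hmq : Measurable (fun q : ℝ × ℝ => F (max q.1 0) q.2 - Hs q.2) :=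
      hmeas.sub (Hs_meas.comp measurable_snd)
    refine ⟨hmq.aestronglyMeasurable, ?_⟩
    unfold HasFiniteIntegral
    rw [lintegral_prod _ hmq.enorm.aemeasurable]
    refine lt_of_le_of_lt (lintegral_mono fun s => hi1 s) ?_
    have h3 := (hP2 (|t2| + 1) (by positivity)).2
    unfold HasFiniteIntegral at h3
    refine lt_of_le_of_lt ?_ h3
    have hsub : Ioc t1 t2 ⊆ Icc 0 (|t2| + 1) := fun s hs =>
      ⟨h1.trans hs.1.le, by linarith [hs.2, le_abs_self t2]⟩
    refine le_trans ?_ (lintegral_mono_set hsub)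
    refine le_of_eq (setLIntegral_congr_fun measurableSet_Ioc fun s hs => ?_)
    have hs0 : 0 ≤ s := h1.trans hs.1.le
    simp only [max_eq_left hs0]
    have h4 : 0 ≤ ∫ x, |x| ∂(P s : Measure ℝ) := integral_nonneg fun x => abs_nonneg x
    rw [Real.enorm_eq_ofReal h4, ofReal_integral_eq_lintegral_ofReal (hP1 s hs0) (Eventually.of_forall fun x => abs_nonneg x)]
    refine lintegral_congr fun x => ?_
    rw [Real.enorm_eq_ofReal_abs]
  · intro ψ hψ hψc t1 t2 h1 h2
    have hψ' : Continuous (deriv ψ) := (hψ.continuous_deriv (by simp))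
    have hψ1 : ContDiff ℝ (⊤ : ℕ∞) (deriv ψ) := by
      have : ContDiff ℝ ((⊤ : ℕ∞) + 1) ψ := by simpa using hψ
      exact ((contDiff_succ_iff_deriv (n := ((⊤ : ℕ∞) : WithTop ℕ∞))).1 this).2.2
    have hψ'' : Continuous (deriv (deriv ψ)) := hψ1.continuous_deriv (by simp)
    have hψc' := hψc.deriv
    have hψc'' := hψc'.deriv
    have cA : Continuous (primitive (cl a)) := by
      have ca := (cl_uc ha).continuous
      exact continuous_iff_continuousAt.2 fun u => (intervalIntegral.integral_hasDerivAt_right (ca.intervalIntegrable 0 u)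
        (ca.stronglyMeasurableAtFilter _ _) ca.continuousAt).continuousAt
    have cB : Continuous (primitive (cl b)) := by
      have ca := (cl_uc hb).continuous
      exact continuous_iff_continuousAt.2 fun u => (intervalIntegral.integral_hasDerivAt_right (ca.intervalIntegrable 0 u)
        (ca.stronglyMeasurableAtFilter _ _) ca.continuousAt).continuousAt
    obtain ⟨CA, hCA⟩ := isCompact_Icc.exists_bound_of_continuousOn (cA.continuousOn (s := Icc 0 1))
    obtain ⟨CB, hCB⟩ := isCompact_Icc.exists_bound_of_continuousOn (cB.continuousOn (s := Icc 0 1))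
    let k : ℝ → ℝ → ℝ := fun s x => (1/2) * primitive (cl a) (F (max s 0) x) * deriv (deriv ψ) x +
      primitive (cl b) (F (max s 0) x) * deriv ψ x
    have hkm : Measurable (uncurry k) := by
      refine ((((cA.measurable.comp hmeas).const_mul (1/2)).mul (hψ''.measurable.comp measurable_snd))).add
        ((cB.measurable.comp hmeas).mul (hψ'.measurable.comp measurable_snd))
    have hkb : ∀ s x, ‖k s x‖ ≤ (1/2) * CA * ‖deriv (deriv ψ) x‖ + CB * ‖deriv ψ x‖ := fun s x => by
      have e1 := hCA _ (⟨hnn s x, hle1 s x⟩ : F (max s 0) x ∈ Icc (0:ℝ) 1)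
      have e2 := hCB _ (⟨hnn s x, hle1 s x⟩ : F (max s 0) x ∈ Icc (0:ℝ) 1)
      refine (norm_add_le _ _).trans (add_le_add ?_ ?_)
      · rw [norm_mul, norm_mul]
        norm_num
        gcongr
        simpa using e1
      · rw [norm_mul]; gcongr
    have hbi : Integrable (fun x => (1/2) * CA * ‖deriv (deriv ψ) x‖ + CB * ‖deriv ψ x‖) :=
      ((hψ''.integrable_of_hasCompactSupport hψc'').norm.const_mul _).add
        ((hψ'.integrable_of_hasCompactSupport hψc').norm.const_mul _)
    have hki : ∀ T, Integrable (uncurry k) ((volume.restrict (Ioc 0 T)).prod volume) := fun T => by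
      have h3 : Integrable (fun q : ℝ × ℝ => (1:ℝ) * ((1/2) * CA * ‖deriv (deriv ψ) q.2‖ + CB * ‖deriv ψ q.2‖))
        ((volume.restrict (Ioc 0 T)).prod volume) :=
        Integrable.mul_prod (integrable_const (1:ℝ)) hbi
      refine h3.mono' hkm.aestronglyMeasurable (Eventually.of_forall fun q => ?_)
      rw [one_mul]; exact hkb q.1 q.2
    let f : ContDiffBump (0:ℝ) := ⟨t2 + 1, t2 + 2, by linarith, by linarith⟩
    have hf1 : ∀ s, |s| < t2 + 1 → f s = 1 ∧ deriv f s = 0 := fun s hs => by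
      have : f =ᶠ[𝓝 s] 1 := f.eventuallyEq_one_of_mem_ball (by simpa [f] using hs)
      refine ⟨this.eq_of_nhds, ?_⟩
      rw [this.deriv_eq]; simp
    have hg1 : ContDiff ℝ (⊤ : ℕ∞) (uncurry (fun s x : ℝ => f s * ψ x)) := by
      exact (f.contDiff.comp contDiff_fst).mul (hψ.comp contDiff_snd)
    have hg2 : HasCompactSupport (uncurry (fun s x : ℝ => f s * ψ x)) := by
      refine HasCompactSupport.intro (f.hasCompactSupport.isCompact.prod hψc.isCompact) ?_
      rintro ⟨s, x⟩ hsx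
      simp only [uncurry_apply_pair]
      by_contra h
      have h3 := mul_ne_zero_iff.1 h
      exact hsx ⟨subset_tsupport _ h3.1, subset_tsupport _ h3.2⟩
    have key : ∀ t, 0 ≤ t → t ≤ t2 → (∫ x, ψ x * F t x) - (∫ x, ψ x * F₀ x) =
        ∫ s in (0:ℝ)..t, ∫ x, k s x := fun t ht ht2 => by
      have := hF _ hg1 hg2 t ht
      simp only [(hf1 t (by rw [abs_of_nonneg ht]; linarith)).1, (hf1 0 (by simp; linarith)).1, one_mul] at this
      rw [this, intervalIntegral.integral_of_le ht]
      rw [integral_integral_swap (hki t)]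
      refine integral_congr_ae (Eventually.of_forall fun x => ?_)
      simp only
      rw [intervalIntegral.integral_of_le ht]
      refine setIntegral_congr_fun measurableSet_Ioc fun s hs => ?_
      have hs0 : 0 ≤ s := hs.1.le
      have hs1 := hf1 s (by rw [abs_of_nonneg hs0]; linarith [hs.2])
      have hd : deriv (fun r => f r * ψ x) s = 0 := by
        rw [deriv_mul_const f.contDiff.contDiffAt.differentiableAt_one, hs1.2, zero_mul]
      have hFI : F s x ∈ Icc (0:ℝ) 1 := by
        have := hnn s x; have := hle1 s x
        rw [max_eq_left hs0] at *; constructor <;> assumption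
      simp only [hs1.1, one_mul, hd, mul_zero, add_zero, k, max_eq_left hs0]
      rw [prim_cl hFI, prim_cl hFI]
    have hii : ∀ T, IntegrableOn (fun s => ∫ x, k s x) (Ioc 0 T) := fun T => (hki T).integral_prod_left
    have ii1 : IntervalIntegrable (fun s => ∫ x, k s x) volume 0 t1 :=
      (intervalIntegrable_iff_integrableOn_Ioc_of_le h1).2 (hii t1)
    have ii2 : IntervalIntegrable (fun s => ∫ x, k s x) volume 0 t2 :=
      (intervalIntegrable_iff_integrableOn_Ioc_of_le (h1.trans h2)).2 (hii t2)
    have k1 := key t1 h1 h2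
    have k2 := key t2 (h1.trans h2) le_rfl
    have k3 := intervalIntegral.integral_interval_sub_left ii2 ii1
    simp only [max_eq_left h1, max_eq_left (h1.trans h2)]
    change _ = ∫ s in t1..t2, ∫ x, k s x
    linarith

end WF

namespace WF

structure Cdf (F : ℝ → ℝ) : Prop where
  mono : Monotone F
  nonneg : ∀ x, 0 ≤ F x
  le_one : ∀ x, F x ≤ 1
  bot : Tendsto F atBot (𝓝 0)
  top : Tendsto F atTop (𝓝 1)

theorem Cdf.bdd {F : ℝ → ℝ} (h : Cdf F) {u : ℝ} (hu : 0 < u) : BddBelow {x | u < F x} := by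
  obtain ⟨y, hy⟩ := (h.bot.eventually_lt_const hu).exists
  refine ⟨y, fun x hx => ?_⟩
  by_contra! hlt
  have := h.mono hlt.le
  have hx' : u < F x := hx
  linarith

theorem Cdf.nonempty {F : ℝ → ℝ} (h : Cdf F) {u : ℝ} (hu : u < 1) : {x | u < F x}.Nonempty :=
  (h.top.eventually_const_lt hu).exists

theorem Cdf.pinv_le {F : ℝ → ℝ} (h : Cdf F) {u x : ℝ} (hu : 0 < u) (hx : u < F x) : pinv F u ≤ x :=
  csInf_le (h.bdd hu) hx

theorem Cdf.lt_of {F : ℝ → ℝ} (h : Cdf F) {u x : ℝ} (hu : u < 1) (hx : pinv F u < x) : u < F x := by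
  obtain ⟨y, hy, hyx⟩ := exists_lt_of_csInf_lt (h.nonempty hu) hx
  have hy' : u < F y := hy
  exact hy'.trans_le (h.mono hyx.le)

theorem Cdf.pinv_mono {F : ℝ → ℝ} (h : Cdf F) : MonotoneOn (pinv F) (Ioo 0 1) := by
  intro u hu v hv huv
  exact csInf_le_csInf (h.bdd hu.1) (h.nonempty hv.2) fun x hx => lt_of_le_of_lt huv hx

theorem Cdf.pinv_meas {F : ℝ → ℝ} (h : Cdf F) : AEMeasurable (pinv F) (volume.restrict (Ioo 0 1)) :=
  aemeasurable_restrict_of_monotoneOn measurableSet_Ioo h.pinv_mono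

theorem W1 {F G : ℝ → ℝ} (hF : Cdf F) (hG : Cdf G) (r : ℝ) :
    ∫⁻ u in Ioo (0:ℝ) 1, ENNReal.ofReal (pinv G u - pinv F u - r) =
    ∫⁻ x, ENNReal.ofReal (F x - G (x + r)) := by
  have hFm := hF.mono.measurable
  have hGm := hG.mono.measurable
  let S : Set (ℝ × ℝ) := {q | G (q.1 + r) ≤ q.2 ∧ q.2 < F q.1}
  have hS : MeasurableSet S := by
    refine (measurableSet_le (hGm.comp (measurable_fst.add_const r)) measurable_snd).inter
      (measurableSet_lt measurable_snd (hFm.comp measurable_fst))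
  have hsw := lintegral_lintegral_swap (μ := (volume : Measure ℝ)) (ν := volume.restrict (Ioo (0:ℝ) 1))
    (f := fun x u => S.indicator (1 : ℝ × ℝ → ℝ≥0∞) (x, u))
    ((measurable_one.indicator hS).aemeasurable)
  have h1 : ∀ x, ∫⁻ u in Ioo (0:ℝ) 1, S.indicator (1 : ℝ × ℝ → ℝ≥0∞) (x, u) = ENNReal.ofReal (F x - G (x + r)) := by
    intro x
    have e : (fun u => S.indicator (1 : ℝ × ℝ → ℝ≥0∞) (x, u)) = (Ico (G (x + r)) (F x)).indicator 1 := by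
      ext u
      simp [indicator_apply, S]
    rw [e, lintegral_indicator_one measurableSet_Ico, Measure.restrict_apply measurableSet_Ico,
      ← Real.volume_Ico]
    refine le_antisymm (measure_mono inter_subset_left) ?_
    rw [← Ioo_ae_eq_Ico.measure_eq]
    refine measure_mono fun u hu => ⟨⟨hu.1.le, hu.2⟩, (hG.nonneg _).trans_lt hu.1, hu.2.trans_le (hF.le_one _)⟩
  have h2 : ∀ u ∈ Ioo (0:ℝ) 1, ∫⁻ x, S.indicator (1 : ℝ × ℝ → ℝ≥0∞) (x, u) =
      ENNReal.ofReal (pinv G u - pinv F u - r) := by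
    intro u hu
    have hm : MeasurableSet {x | (x, u) ∈ S} := measurable_prodMk_right hS
    have e : (fun x => S.indicator (1 : ℝ × ℝ → ℝ≥0∞) (x, u)) = {x | (x, u) ∈ S}.indicator 1 := by
      ext x
      simp [indicator_apply]
    have e2 : pinv G u - pinv F u - r = (pinv G u - r) - pinv F u := by ring
    rw [e, lintegral_indicator_one hm, e2]
    refine le_antisymm ?_ ?_
    · rw [← Real.volume_Icc]
      refine measure_mono fun x hx => ⟨hF.pinv_le hu.1 hx.2, ?_⟩
      by_contra! hlt
      have := hG.lt_of (x := x + r) hu.2 (by linarith)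
      exact absurd hx.1 (not_le.2 this)
    · rw [← Real.volume_Ioo]
      refine measure_mono fun x hx => ⟨?_, hF.lt_of hu.2 hx.1⟩
      by_contra! hlt
      have := hG.pinv_le hu.1 hlt
      linarith [hx.2]
  simp only [h1] at hsw
  rw [hsw]
  exact (setLIntegral_congr_fun measurableSet_Ioo h2).symm

theorem rp_id {p : ℝ} (hp : 1 < p) (z : ℝ) :
    ∫⁻ r in Ioi (0:ℝ), ENNReal.ofReal (p * (p - 1) * r ^ (p - 2)) * ENNReal.ofReal (z - r) =
    ENNReal.ofReal ((max z 0) ^ p) := by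
  rcases le_or_gt z 0 with hz | hz
  · rw [max_eq_right hz, Real.zero_rpow (by linarith), ENNReal.ofReal_zero]
    rw [setLIntegral_congr_fun (g := fun _ => 0) measurableSet_Ioi]; · simp
    intro r hr
    have hr' : 0 < r := hr
    simp only
    rw [ENNReal.ofReal_of_nonpos (by linarith : z - r ≤ 0), mul_zero]
  rw [max_eq_left hz.le]
  have hu : Ioi (0:ℝ) = Ioc 0 z ∪ Ioi z := (Ioc_union_Ioi_eq_Ioi hz.le).symm
  have hd : Disjoint (Ioc 0 z) (Ioi z) := Ioc_disjoint_Ioi le_rfl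
  rw [hu, lintegral_union measurableSet_Ioi hd]
  have h2 : ∫⁻ r in Ioi z, ENNReal.ofReal (p * (p - 1) * r ^ (p - 2)) * ENNReal.ofReal (z - r) = 0 := by
    rw [setLIntegral_congr_fun (g := fun _ => 0) measurableSet_Ioi]; · simp
    intro r hr
    have hr' : z < r := hr
    simp only
    rw [ENNReal.ofReal_of_nonpos (by linarith : z - r ≤ 0), mul_zero]
  rw [h2, add_zero]
  have i1 : IntervalIntegrable (fun r : ℝ => r ^ (p - 2)) volume 0 z :=
    intervalIntegral.intervalIntegrable_rpow' (by linarith)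
  have i2 : IntervalIntegrable (fun r : ℝ => r ^ (p - 1)) volume 0 z :=
    intervalIntegral.intervalIntegrable_rpow' (by linarith)
  have i3 : IntervalIntegrable (fun r : ℝ => p * (p - 1) * z * r ^ (p - 2) - p * (p - 1) * r ^ (p - 1)) volume 0 z :=
    (i1.const_mul _).sub (i2.const_mul _)
  have h3 : ∫⁻ r in Ioc 0 z, ENNReal.ofReal (p * (p - 1) * r ^ (p - 2)) * ENNReal.ofReal (z - r) =
      ∫⁻ r in Ioc 0 z, ENNReal.ofReal (p * (p - 1) * z * r ^ (p - 2) - p * (p - 1) * r ^ (p - 1)) := by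
    refine setLIntegral_congr_fun measurableSet_Ioc fun r hr => ?_
    have hr0 : 0 < r := hr.1
    have hpp : 0 ≤ p * (p - 1) * r ^ (p - 2) := by
      have : 0 ≤ p - 1 := by linarith
      positivity
    rw [← ENNReal.ofReal_mul hpp]
    congr 1
    have : r ^ (p - 1) = r ^ (p - 2) * r := by
      rw [← Real.rpow_add_one hr0.ne']; congr 1; ring
    rw [this]; ring
  rw [h3, ← ofReal_integral_eq_lintegral_ofReal ((intervalIntegrable_iff_integrableOn_Ioc_of_le hz.le).1 i3),
    ← intervalIntegral.integral_of_le hz.le, intervalIntegral.integral_sub (i1.const_mul _) (i2.const_mul _),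
    intervalIntegral.integral_const_mul, intervalIntegral.integral_const_mul,
    integral_rpow (Or.inl (by linarith)), integral_rpow (Or.inl (by linarith))]
  · congr 1
    have e1 : p - 2 + 1 = p - 1 := by ring
    have e2 : p - 1 + 1 = p := by ring
    rw [e1, e2, Real.zero_rpow (by linarith), Real.zero_rpow (by linarith)]
    have e3 : z ^ p = z ^ (p - 1) * z := by
      rw [← Real.rpow_add_one hz.ne']; congr 1; ring
    have : p - 1 ≠ 0 := by linarith
    have : p ≠ 0 := by linarith
    rw [e3]
    field_simp
    ring
  · filter_upwards [ae_restrict_mem measurableSet_Ioc] with r hr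
    have hr0 : 0 < r := hr.1
    have : r ^ (p - 1) = r ^ (p - 2) * r := by
      rw [← Real.rpow_add_one hr0.ne']; congr 1; ring
    have e : p * (p - 1) * z * r ^ (p - 2) - p * (p - 1) * r ^ (p - 1) = p * (p - 1) * r ^ (p - 2) * (z - r) := by
      rw [this]; ring
    simp only [Pi.zero_apply]
    rw [e]
    have : 0 ≤ p - 1 := by linarith
    have : 0 ≤ z - r := by linarith [hr.2]
    positivity

theorem Wmono {μ : Measure ℝ} [SFinite μ] {p : ℝ} (hp : 1 ≤ p) {z1 z2 : ℝ → ℝ} (h1 : AEMeasurable z1 μ)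
    (h2 : AEMeasurable z2 μ)
    (H : ∀ r, ∫⁻ u, ENNReal.ofReal (z2 u - r) ∂μ ≤ ∫⁻ u, ENNReal.ofReal (z1 u - r) ∂μ) :
    ∫⁻ u, ENNReal.ofReal ((max (z2 u) 0) ^ p) ∂μ ≤ ∫⁻ u, ENNReal.ofReal ((max (z1 u) 0) ^ p) ∂μ := by
  rcases hp.eq_or_lt with h | h
  · subst h
    have := H 0
    simpa [Real.rpow_one, ENNReal.ofReal_max] using this
  · have hr : Measurable (fun r : ℝ => ENNReal.ofReal (p * (p - 1) * r ^ (p - 2))) := by fun_prop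
    have key : ∀ z : ℝ → ℝ, AEMeasurable z μ → ∫⁻ u, ENNReal.ofReal ((max (z u) 0) ^ p) ∂μ =
        ∫⁻ r in Ioi (0:ℝ), ENNReal.ofReal (p * (p - 1) * r ^ (p - 2)) * ∫⁻ u, ENNReal.ofReal (z u - r) ∂μ := by
      intro z hz
      simp only [← rp_id h]
      rw [lintegral_lintegral_swap]
      · refine lintegral_congr fun r => ?_
        rw [lintegral_const_mul' _ _ ENNReal.ofReal_ne_top]
      · refine ((hr.comp measurable_snd).aemeasurable).mul ?_
        exact ((hz.comp_fst).sub measurable_snd.aemeasurable).ennreal_ofReal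
    rw [key z1 h1, key z2 h2]
    exact lintegral_mono fun r => mul_le_mul_right (H r) _

theorem abs_split {p : ℝ} (hp : 1 ≤ p) (z : ℝ) :
    ENNReal.ofReal (|z| ^ p) = ENNReal.ofReal ((max z 0) ^ p) + ENNReal.ofReal ((max (-z) 0) ^ p) := by
  have h0 : (0:ℝ) ^ p = 0 := Real.zero_rpow (by linarith)
  rcases le_total z 0 with h | h
  · rw [abs_of_nonpos h, max_eq_right h, max_eq_left (by linarith), h0]; simp
  · rw [abs_of_nonneg h, max_eq_left h, max_eq_right (by linarith), h0]; simp

theorem W_le {F1 G1 F2 G2 : ℝ → ℝ} (hF1 : Cdf F1) (hG1 : Cdf G1) (hF2 : Cdf F2) (hG2 : Cdf G2)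
    (h : ∀ r, ∫⁻ x, ENNReal.ofReal (F2 x - G2 (x + r)) ≤ ∫⁻ x, ENNReal.ofReal (F1 x - G1 (x + r)))
    (h' : ∀ r, ∫⁻ x, ENNReal.ofReal (G2 x - F2 (x + r)) ≤ ∫⁻ x, ENNReal.ofReal (G1 x - F1 (x + r)))
    {p : ℝ} (hp : 1 ≤ p) : Wdist p F2 G2 ≤ Wdist p F1 G1 := by
  unfold Wdist
  refine ENNReal.rpow_le_rpow ?_ (by positivity)
  have m1 := hF1.pinv_meas.sub hG1.pinv_meas
  have m2 := hF2.pinv_meas.sub hG2.pinv_meas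
  have n1 := hG1.pinv_meas.sub hF1.pinv_meas
  have n2 := hG2.pinv_meas.sub hF2.pinv_meas
  have key : ∀ F G : ℝ → ℝ, AEMeasurable (pinv F - pinv G) (volume.restrict (Ioo 0 1)) →
      ∫⁻ u in Ioo (0:ℝ) 1, ENNReal.ofReal (|pinv F u - pinv G u| ^ p) =
      (∫⁻ u in Ioo (0:ℝ) 1, ENNReal.ofReal ((max ((pinv F - pinv G) u) 0) ^ p)) +
      ∫⁻ u in Ioo (0:ℝ) 1, ENNReal.ofReal ((max ((pinv G - pinv F) u) 0) ^ p) := fun F G hm => by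
    rw [← lintegral_add_left']
    · refine lintegral_congr fun u => ?_
      rw [abs_split hp]; simp
    · exact ((hm.max aemeasurable_const).pow_const p).ennreal_ofReal
  rw [key _ _ m1, key _ _ m2]
  refine add_le_add (Wmono hp m1 m2 fun r => ?_) (Wmono hp n1 n2 fun r => ?_)
  · simp only [Pi.sub_apply]
    rw [W1 hG2 hF2, W1 hG1 hF1]; exact h' r
  · simp only [Pi.sub_apply]
    rw [W1 hF2 hG2, W1 hF1 hG1]; exact h r

theorem Sol.cdf {A B : ℝ → ℝ} {F : ℝ → ℝ → ℝ} (hF : Sol A B F) (t : ℝ) : Cdf (F t) :=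
  ⟨hF.mono t, hF.nonneg t, hF.le_one t, hF.bot t, hF.top t⟩

theorem contr_lint {a A B : ℝ → ℝ} {Ca Cb : ℝ} {F G : ℝ → ℝ → ℝ} (hc : Coef a A B Ca Cb)
    (hF : Sol A B F) (hG : Sol A B G) (t1 t2 r : ℝ) (h1 : 0 ≤ t1) (h2 : t1 ≤ t2) :
    ∫⁻ x, ENNReal.ofReal (F t2 x - G t2 (x + r)) ≤ ∫⁻ x, ENNReal.ofReal (F t1 x - G t1 (x + r)) := by
  have key : ∀ t, ∫⁻ x, ENNReal.ofReal (F t x - G t (x + r)) =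
      ENNReal.ofReal (∫ x, max (F t x - G t (x + r)) 0) := fun t => by
    have hi : Integrable (fun x => max (F t x - G t (x + r)) 0) := pos_int hF (hG.sh r) t
    rw [ofReal_integral_eq_lintegral_ofReal hi
      (Eventually.of_forall fun x => le_max_right _ _)]
    refine lintegral_congr fun x => ?_
    rw [ENNReal.ofReal_max]; simp
  rw [key, key]
  exact ENNReal.ofReal_le_ofReal (main_contr hc hF hG t1 t2 r h1 h2)

end WF

/-- Under (D1), for initial conditions with finite first moments and finite
`W_p` distance, the flow `t ↦ W_p(F_t, G_t)` is nonincreasing on `[0,∞)`. -/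
theorem wasserstein_flow_nonincreasing
    (a b : ℝ → ℝ)
    (ha : ContinuousOn a (Set.Icc 0 1)) (hb : ContinuousOn b (Set.Icc 0 1))
    (ha0 : ∀ u ∈ Set.Icc (0:ℝ) 1, 0 ≤ a u)
    (hD1 : StrictMonoOn (primitive a) (Set.Icc 0 1))
    (μ ν : Measure ℝ) [IsProbabilityMeasure μ] [IsProbabilityMeasure ν]
    (hμ : Integrable (fun x => |x|) μ) (hν : Integrable (fun x => |x|) ν)
    (F G : ℝ → ℝ → ℝ)
    (hF : IsWeakSolution (primitive a) (primitive b) (cdfOf μ) F) (hFmem : MemF F)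
    (hG : IsWeakSolution (primitive a) (primitive b) (cdfOf ν) G) (hGmem : MemF G)
    (p : ℝ) (hp : 1 ≤ p)
    (hW : Wdist p (cdfOf μ) (cdfOf ν) < ⊤) :
    AntitoneOn (fun t => Wdist p (F t) (G t)) (Set.Ici 0) := by
  intro t1 h1 t2 h2 h12
  have h1' : (0:ℝ) ≤ t1 := h1
  have h2' : (0:ℝ) ≤ t2 := h2
  obtain ⟨Ca, Cb, hc⟩ := WF.mkCoef ha hb ha0 hD1
  have sF := WF.mkSol ha hb hF hFmem
  have sG := WF.mkSol ha hb hG hGmem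
  have := WF.W_le (sF.cdf t1) (sG.cdf t1) (sF.cdf t2) (sG.cdf t2)
    (fun r => WF.contr_lint hc sF sG t1 t2 r h1' h12)
    (fun r => WF.contr_lint hc sG sF t1 t2 r h1' h12) hp
  simpa only [max_eq_left h1', max_eq_left h2'] using this
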